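/- arXiv:1411.5709 — 12 statements merged into one kernel-verified Lean document; each statement's English description precedes it below -/
import Mathlib

section
/- Generalized Braid Lemma: Let E be a finite-dimensional real vector space of dimension ≥ 3, A : E × E × E → E a fully symmetric trilinear map, and J, J', K symmetric bilinear forms on E with J and J' nondegenerate. If J(A(U,V,W),W') + J(A(U,V,W'),W) = K(U,V)·J'(W,W') for all U, V, W, W' ∈ E, then A = 0. -/
/-- **Generalized Braid Lemma.** Let `E` be a finite-dimensional real vector space of
dimension `≥ 3`, `A` a fully symmetric trilinear map `E × E × E → E`, and `J, J', K`
symmetric bilinear forms on `E` with `J` and `J'` nondegenerate. If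
`J(A(U,V,W),W') + J(A(U,V,W'),W) = K(U,V)·J'(W,W')` for all `U,V,W,W'`, then `A = 0`. -/
theorem generalized_braid_lemma
    (E : Type*) [AddCommGroup E] [Module ℝ E] [FiniteDimensional ℝ E]
    (hdim : 3 ≤ Module.finrank ℝ E)
    (A : E →ₗ[ℝ] E →ₗ[ℝ] E →ₗ[ℝ] E)
    (hA₁ : ∀ u v w : E, A u v w = A v u w)
    (hA₂ : ∀ u v w : E, A u v w = A u w v)
    (J J' K : E →ₗ[ℝ] E →ₗ[ℝ] ℝ)
    (hJsymm : ∀ u v : E, J u v = J v u)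
    (hJ'symm : ∀ u v : E, J' u v = J' v u)
    (hKsymm : ∀ u v : E, K u v = K v u)
    (hJnondeg : ∀ u : E, (∀ v : E, J u v = 0) → u = 0)
    (hJ'nondeg : ∀ u : E, (∀ v : E, J' u v = 0) → u = 0)
    (h : ∀ U V W W' : E,
      J (A U V W) W' + J (A U V W') W = K U V * J' W W') :
    A = 0 := by
  have hform : ∀ U V W X : E, 2 * J (A U V W) X
      = K U V * J' W X + K U W * J' V X - K U X * J' V W := by
    intro U V W X
    have h1 := h U V W X
    have h2 := h U W V X
    have h3 := h U X V W
    rw [hA₂ U W V] at h2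
    rw [hA₂ U X V, hA₂ U X W] at h3
    linarith
  have hstar : ∀ U V W X : E, K U W * J' V X - K U X * J' V W
      = K V W * J' U X - K V X * J' U W := by
    intro U V W X
    have h1 := hform U V W X
    have h2 := hform V U W X
    rw [hA₁ V U W, hKsymm V U] at h2
    linarith
  have hs : LinearMap.IsSymm (B := J') := ⟨fun u v => by simpa using hJ'symm u v⟩
  obtain ⟨b, hb⟩ := LinearMap.BilinForm.exists_orthogonal_basis hs
  have hb0 : ∀ i j, i ≠ j → J' (b i) (b j) = 0 := fun i j hij => hb hij
  have hbn : ∀ i, J' (b i) (b i) ≠ 0 := by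
    intro i hi
    refine b.ne_zero i (hJ'nondeg _ fun v => ?_)
    have : J' (b i) = 0 := by
      refine b.ext fun j => ?_
      by_cases hij : i = j
      · subst hij; simpa using hi
      · simpa using hb0 i j hij
    rw [this]; rfl
  have third : ∀ i j : Fin (Module.finrank ℝ E), ∃ k, k ≠ i ∧ k ≠ j := by
    intro i j
    have hc : ({i, j} : Finset (Fin (Module.finrank ℝ E))).card < Fintype.card (Fin (Module.finrank ℝ E)) := by
      rw [Fintype.card_fin]
      exact lt_of_le_of_lt Finset.card_le_two hdim
    obtain ⟨k, hk⟩ : ∃ k, k ∉ ({i, j} : Finset (Fin (Module.finrank ℝ E))) := by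
      by_contra! hcon
      rw [Finset.eq_univ_iff_forall.mpr hcon, Finset.card_univ] at hc
      exact lt_irrefl _ hc
    exact ⟨k, by simpa using hk⟩
  have hdiag : ∀ i j, i ≠ j → K (b i) (b i) / J' (b i) (b i) = - (K (b j) (b j) / J' (b j) (b j)) := by
    intro i j hij
    have h1 := hstar (b i) (b j) (b i) (b j)
    rw [hb0 j i hij.symm, hb0 i j hij] at h1
    have := hbn i
    have := hbn j
    field_simp
    linarith
  have hK : K = 0 := by
    refine b.ext fun i => b.ext fun j => ?_
    obtain ⟨k, hki, hkj⟩ := third i j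
    by_cases hij : i = j
    · subst hij
      obtain ⟨l, hli, hlk⟩ := third i k
      have h1 := hdiag i k hki.symm
      have h2 := hdiag i l hli.symm
      have h3 := hdiag k l hlk.symm
      have h4 : K (b i) (b i) / J' (b i) (b i) = 0 := by linarith
      simpa [hbn i] using h4
    · have h1 := hstar (b i) (b k) (b j) (b k)
      rw [hb0 k j hkj, hb0 i k hki.symm, hb0 i j hij] at h1
      simpa [hbn k] using h1
  refine LinearMap.ext fun U => LinearMap.ext fun V => LinearMap.ext fun W => ?_
  refine hJnondeg _ fun X => ?_
  have := hform U V W X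
  simpa [hK] using this
end

section
/- Let E be a real vector space, A : E × E × E → E a fully symmetric trilinear map, and J, J', K symmetric bilinear forms on E. If J(A(U,V,W),W') + J(A(U,V,W'),W) = K(U,V)·J'(W,W') for all U, V, W, W' ∈ E, then for all U, V, W, W' ∈ E one has K(U,V)·J'(W,W') + K(W,W')·J'(U,V) = K(U,W)·J'(V,W') + K(V,W')·J'(U,W). -/
/-- If a fully symmetric trilinear map `A` and symmetric bilinear forms `J, J', K`
satisfy `J(A(U,V,W),W') + J(A(U,V,W'),W) = K(U,V)·J'(W,W')`, then
`K(U,V)·J'(W,W') + K(W,W')·J'(U,V) = K(U,W)·J'(V,W') + K(V,W')·J'(U,W)`. -/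
theorem braid_KJprime_identity
    (E : Type*) [AddCommGroup E] [Module ℝ E]
    (A : E →ₗ[ℝ] E →ₗ[ℝ] E →ₗ[ℝ] E)
    (hA₁ : ∀ u v w : E, A u v w = A v u w)
    (hA₂ : ∀ u v w : E, A u v w = A u w v)
    (J J' K : E →ₗ[ℝ] E →ₗ[ℝ] ℝ)
    (hJsymm : ∀ u v : E, J u v = J v u)
    (hJ'symm : ∀ u v : E, J' u v = J' v u)
    (hKsymm : ∀ u v : E, K u v = K v u)
    (h : ∀ U V W W' : E,
      J (A U V W) W' + J (A U V W') W = K U V * J' W W') :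
    ∀ U V W W' : E,
      K U V * J' W W' + K W W' * J' U V = K U W * J' V W' + K V W' * J' U W := by
  intro U V W W'
  have h1 := h U V W W'
  have h2 := h W W' U V
  have h3 := h U W V W'
  have h4 := h V W' U W
  rw [hA₂ W W' U, hA₁ W U W', hA₂ W W' V, hA₁ W V W'] at h2
  rw [hA₂ U W V] at h3
  rw [hA₂ V W' U, hA₁ V U W', hA₂ V W' W] at h4
  linarith
end

section
/- Let E be a finite-dimensional real vector space of dimension ≥ 3, J' a nondegenerate symmetric bilinear form on E, and K a symmetric bilinear form on E such that K(u,v) = 0 whenever J'(u,v) = 0. Then there exists α ∈ ℝ such that K = α·J'. -/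
/-- If `J'` is a nondegenerate symmetric bilinear form on a finite-dimensional real
vector space of dimension `≥ 3` and `K` is a symmetric bilinear form vanishing on all
`J'`-orthogonal pairs, then `K` is a scalar multiple of `J'`. -/
theorem proportional_of_vanishing_on_orthogonal
    (E : Type*) [AddCommGroup E] [Module ℝ E] [FiniteDimensional ℝ E]
    (hdim : 3 ≤ Module.finrank ℝ E)
    (J' K : E →ₗ[ℝ] E →ₗ[ℝ] ℝ)
    (hJ'symm : ∀ u v : E, J' u v = J' v u)
    (hJ'nondeg : ∀ u : E, (∀ v : E, J' u v = 0) → u = 0)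
    (hKsymm : ∀ u v : E, K u v = K v u)
    (h : ∀ u v : E, J' u v = 0 → K u v = 0) :
    ∃ α : ℝ, ∀ u v : E, K u v = α * J' u v := by
  have key : ∀ u : E, ∃ c : ℝ, ∀ v : E, K u v = c * J' u v := by
    intro u
    by_cases hu : ∀ v, J' u v = 0
    · exact ⟨0, fun v => by rw [h u v (hu v)]; ring⟩
    · push Not at hu
      obtain ⟨a, ha⟩ := hu
      refine ⟨K u a / J' u a, fun v => ?_⟩
      have h1 := h u (v - (J' u v / J' u a) • a) (by
        simp only [map_sub, map_smul, smul_eq_mul]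
        field_simp
        ring)
      simp only [map_sub, map_smul, smul_eq_mul] at h1
      rw [sub_eq_zero.mp h1]
      ring
  choose c hc using key
  have hconn : ∀ u v, J' u v ≠ 0 → c u = c v := by
    intro u v huv
    have h1 := hc u v
    rw [hKsymm, hc v u, hJ'symm v u] at h1
    exact (mul_right_cancel₀ huv h1).symm
  have hne : ∀ u : E, u ≠ 0 → ∃ a, J' u a ≠ 0 := by
    intro u hu
    by_contra! hcon
    exact hu (hJ'nondeg u hcon)
  have hconst : ∀ u v : E, u ≠ 0 → v ≠ 0 → c u = c v := by
    intro u v hu hv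
    obtain ⟨a, ha⟩ := hne u hu
    obtain ⟨b, hb⟩ := hne v hv
    have hw : ∃ w, J' u w ≠ 0 ∧ J' v w ≠ 0 := by
      by_cases hva : J' v a = 0
      · by_cases hub : J' u b = 0
        · exact ⟨a + b, by simpa [hub] using ha, by simpa [hva] using hb⟩
        · exact ⟨b, hub, hb⟩
      · exact ⟨a, ha, hva⟩
    obtain ⟨w, h1, h2⟩ := hw
    exact (hconn u w h1).trans (hconn v w h2).symm
  by_cases hE : ∃ u : E, u ≠ 0
  · obtain ⟨u₀, hu₀⟩ := hE
    refine ⟨c u₀, fun u v => ?_⟩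
    by_cases hu : u = 0
    · simp [hu]
    · rw [hc u v, hconst u u₀ hu hu₀]
  · push Not at hE
    exact ⟨0, fun u v => by simp [hE u]⟩
end

section
/- Let E be a finite-dimensional real vector space of dimension ≥ 2, J' a nondegenerate symmetric bilinear form on E, and P : E → E a linear endomorphism that is J'-symmetric (J'(P(u),v) = J'(u,P(v)) for all u,v) and such that every vector w ∈ E with J'(w,w) ≠ 0 satisfies P(w) ∈ ℝ·w. Then P is a scalar multiple of the identity. -/
lemma exists_two_good (A B C : ℝ) (hA : A ≠ 0) :
    ∃ t s : ℝ, t ≠ 0 ∧ s ≠ 0 ∧ t ≠ s ∧ A + t * B + t * t * C ≠ 0 ∧ A + s * B + s * s * C ≠ 0 := by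
  by_contra! h
  have h12 := h 1 2 (by norm_num) (by norm_num) (by norm_num)
  have h13 := h 1 3 (by norm_num) (by norm_num) (by norm_num)
  have h14 := h 1 4 (by norm_num) (by norm_num) (by norm_num)
  have h23 := h 2 3 (by norm_num) (by norm_num) (by norm_num)
  have h24 := h 2 4 (by norm_num) (by norm_num) (by norm_num)
  have h34 := h 3 4 (by norm_num) (by norm_num) (by norm_num)
  apply hA
  by_cases h1 : A + 1 * B + 1 * 1 * C = 0
  · by_cases h2 : A + 2 * B + 2 * 2 * C = 0
    · by_cases h3 : A + 3 * B + 3 * 3 * C = 0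
      · linarith
      · linarith [h34 h3]
    · linarith [h23 h2, h24 h2]
  · linarith [h12 h1, h13 h1, h14 h1]

/-- If `P` is a `J'`-symmetric endomorphism of a finite-dimensional real vector space
of dimension `≥ 2` (with `J'` a nondegenerate symmetric bilinear form) such that every
`J'`-anisotropic vector is an eigenvector of `P`, then `P` is a homothety. -/
theorem homothety_of_anisotropic_eigenvectors
    (E : Type*) [AddCommGroup E] [Module ℝ E] [FiniteDimensional ℝ E]
    (hdim : 2 ≤ Module.finrank ℝ E)
    (J' : E →ₗ[ℝ] E →ₗ[ℝ] ℝ)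
    (hJ'symm : ∀ u v : E, J' u v = J' v u)
    (hJ'nondeg : ∀ u : E, (∀ v : E, J' u v = 0) → u = 0)
    (P : E →ₗ[ℝ] E)
    (hPsymm : ∀ u v : E, J' (P u) v = J' u (P v))
    (hPeig : ∀ w : E, J' w w ≠ 0 → ∃ c : ℝ, P w = c • w) :
    ∃ c : ℝ, P = c • LinearMap.id := by
  have hw : ∃ w, J' w w ≠ 0 := by
    by_contra! h
    have : Nontrivial E := Module.nontrivial_of_finrank_pos (R := ℝ) (by omega)
    obtain ⟨u, hu⟩ := exists_ne (0 : E)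
    refine hu (hJ'nondeg u fun v => ?_)
    have h1 := h (u + v)
    simp only [map_add, LinearMap.add_apply, h u, h v, hJ'symm v u] at h1
    linarith
  obtain ⟨w, hw⟩ := hw
  have hw0 : w ≠ 0 := by rintro rfl; simp at hw
  obtain ⟨c, hc⟩ := hPeig w hw
  refine ⟨c, LinearMap.ext fun v => ?_⟩
  simp only [LinearMap.smul_apply, LinearMap.id_apply]
  obtain ⟨t, s, ht, hs, hts, gt, gs⟩ := exists_two_good (J' w w) (2 * J' w v) (J' v v) hw
  have key : ∀ t : ℝ, t ≠ 0 → J' w w + t * (2 * J' w v) + t * t * J' v v ≠ 0 →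
      ∃ a : ℝ, P v - c • v = a • v + (a / t) • w := by
    intro t ht g
    obtain ⟨d, hd⟩ := hPeig (w + t • v) (by
      simp only [map_add, LinearMap.add_apply, map_smul, LinearMap.smul_apply, smul_eq_mul,
        hJ'symm v w]
      convert g using 1; ring)
    rw [map_add, map_smul, hc] at hd
    refine ⟨d - c, ?_⟩
    have h2 : P v = t⁻¹ • (d • (w + t • v) - c • w) := by
      rw [← hd, add_sub_cancel_left, smul_smul, inv_mul_cancel₀ ht, one_smul]
    rw [h2]
    match_scalars <;> field_simp
  obtain ⟨a, ha⟩ := key t ht gt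
  obtain ⟨b, hb⟩ := key s hs gs
  have hab : (a - b) • v = (b / s - a / t) • w := by
    have := ha.symm.trans hb
    rw [sub_smul, sub_smul, sub_eq_sub_iff_add_eq_add, this, add_comm]
  by_cases h : a = b
  · subst h
    rw [sub_self, zero_smul, eq_comm, smul_eq_zero] at hab
    have h3 := hab.resolve_right hw0
    have h4 : a = 0 := by
      field_simp at h3
      have h5 : a * (t - s) = 0 := by linarith
      exact (mul_eq_zero.mp h5).resolve_right (sub_ne_zero.mpr hts)
    rw [h4] at ha
    simpa [sub_eq_zero] using ha
  · have hne : a - b ≠ 0 := sub_ne_zero.mpr h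
    have hv : v = ((a - b)⁻¹ * (b / s - a / t)) • w := by
      rw [mul_smul, ← hab, smul_smul, inv_mul_cancel₀ hne, one_smul]
    rw [hv, map_smul, hc, smul_comm]
end

section
/- Let E be a finite-dimensional real vector space of dimension ≥ 3, J' a nondegenerate symmetric bilinear form on E, and K a symmetric bilinear form on E satisfying K(U,V)·J'(W,W') + K(W,W')·J'(U,V) = K(U,W)·J'(V,W') + K(V,W')·J'(U,W) for all U, V, W, W' ∈ E. Then K = 0. -/
/-- If `J'` is a nondegenerate symmetric bilinear form on a finite-dimensional real
vector space of dimension `≥ 3` and `K` is a symmetric bilinear form satisfying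
`K(U,V)·J'(W,W') + K(W,W')·J'(U,V) = K(U,W)·J'(V,W') + K(V,W')·J'(U,W)` for all
`U, V, W, W'`, then `K = 0`. -/
theorem K_eq_zero_of_identity
    (E : Type*) [AddCommGroup E] [Module ℝ E] [FiniteDimensional ℝ E]
    (hdim : 3 ≤ Module.finrank ℝ E)
    (J' K : E →ₗ[ℝ] E →ₗ[ℝ] ℝ)
    (hJ'symm : ∀ u v : E, J' u v = J' v u)
    (hJ'nondeg : ∀ u : E, (∀ v : E, J' u v = 0) → u = 0)
    (hKsymm : ∀ u v : E, K u v = K v u)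
    (h : ∀ U V W W' : E,
      K U V * J' W W' + K W W' * J' U V = K U W * J' V W' + K V W' * J' U W) :
    K = 0 := by
  classical
  obtain ⟨e, he⟩ := LinearMap.BilinForm.exists_orthogonal_basis (B := J') ⟨fun u v => hJ'symm u v⟩
  have ho : ∀ i j, i ≠ j → J' (e i) (e j) = 0 := fun i j hij => he hij
  have hn : ∀ i, J' (e i) (e i) ≠ 0 := by
    intro i hi
    have h0 : J' (e i) = 0 := by
      refine e.ext fun j => ?_
      by_cases hij : i = j
      · subst hij; simpa using hi
      · simpa using ho i j hij
    exact e.ne_zero i (hJ'nondeg _ fun v => by rw [h0]; rfl)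
  have third : ∀ i j : Fin (Module.finrank ℝ E), ∃ k, k ≠ i ∧ k ≠ j := by
    intro i j
    have hc : ({i, j} : Finset (Fin (Module.finrank ℝ E))).card
        < (Finset.univ : Finset (Fin (Module.finrank ℝ E))).card := by
      have := Finset.card_le_two (a := i) (b := j)
      rw [Finset.card_univ, Fintype.card_fin]
      omega
    obtain ⟨k, -, hk⟩ := Finset.exists_mem_notMem_of_card_lt_card hc
    exact ⟨k, by simpa using hk⟩
  have hpair : ∀ i j, i ≠ j →
      K (e j) (e j) * J' (e i) (e i) + K (e i) (e i) * J' (e j) (e j) = 0 := by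
    intro i j hij
    have := h (e j) (e j) (e i) (e i)
    rw [ho j i hij.symm] at this
    linarith
  refine e.ext fun i => e.ext fun j => ?_
  change K (e i) (e j) = 0
  by_cases hij : i = j
  · subst hij
    obtain ⟨j, hji, -⟩ := third i i
    obtain ⟨k, hki, hkj⟩ := third i j
    have h1 := hpair i j hji.symm
    have h2 := hpair i k hki.symm
    have h3 := hpair j k hkj.symm
    have h4 : K (e i) (e i) * (2 * (J' (e j) (e j) * J' (e k) (e k))) = 0 := by
      linear_combination J' (e k) (e k) * h1 + J' (e j) (e j) * h2 - J' (e i) (e i) * h3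
    exact (mul_eq_zero.mp h4).resolve_right
      (mul_ne_zero two_ne_zero (mul_ne_zero (hn j) (hn k)))
  · obtain ⟨k, hki, hkj⟩ := third i j
    have := h (e i) (e j) (e k) (e k)
    rw [ho i j hij, ho j k hkj.symm, ho i k hki.symm] at this
    have h4 : K (e i) (e j) * J' (e k) (e k) = 0 := by linarith
    exact (mul_eq_zero.mp h4).resolve_right (hn k)
end

section
/- Let R : ℝⁿ → ℝⁿ be a linear map of rank ≥ 2. If L : ℝⁿ × ℝⁿ → ℝⁿ is a symmetric bilinear map such that for every x ∈ ℝⁿ the linear map y ↦ L(x,y) is a scalar multiple of R, then L = 0. (Equivalently, the first prolongation of the one-dimensional Lie algebra ℝ·R ⊆ End(ℝⁿ) vanishes.) -/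
/-- If `R : ℝⁿ → ℝⁿ` is a linear map of rank `≥ 2` and `L` is a symmetric bilinear map
`ℝⁿ × ℝⁿ → ℝⁿ` such that each partial map `y ↦ L(x,y)` is a scalar multiple of `R`,
then `L = 0` (the first prolongation of the line `ℝ·R` vanishes). -/
theorem first_prolongation_of_line_vanishes
    (n : ℕ) (R : (Fin n → ℝ) →ₗ[ℝ] (Fin n → ℝ))
    (hrank : 2 ≤ Module.finrank ℝ (LinearMap.range R))
    (L : (Fin n → ℝ) →ₗ[ℝ] (Fin n → ℝ) →ₗ[ℝ] (Fin n → ℝ))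
    (hLsymm : ∀ x y : Fin n → ℝ, L x y = L y x)
    (hL : ∀ x : Fin n → ℝ, ∃ c : ℝ, L x = c • R) :
    L = 0 := by
  choose c hc using hL
  by_contra hne
  obtain ⟨x, hx⟩ : ∃ x, c x ≠ 0 := by
    by_contra h
    push Not at h
    apply hne
    refine LinearMap.ext fun x => ?_
    simp [hc x, h x]
  have key : ∀ y, c x • R y = c y • R x := fun y => by
    have h := hLsymm x y
    rw [hc x, hc y] at h
    simpa using h
  have h1 : Module.finrank ℝ (LinearMap.range R) ≤ 1 := by
    refine finrank_le_one (⟨R x, x, rfl⟩ : LinearMap.range R) ?_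
    rintro ⟨_, y, rfl⟩
    refine ⟨(c x)⁻¹ * c y, Subtype.ext ?_⟩
    change ((c x)⁻¹ * c y) • R x = R y
    rw [mul_smul, ← key y, smul_smul, inv_mul_cancel₀ hx, one_smul]
  omega
end

section
/- Suppose φ(p) = p, Dφ_p = id, D²φ_p = 0, k(p,r) = r for all r ∈ I, and for every r ∈ I and all U, V ∈ ℝⁿ both Δ_{r,U,V}(p) = 0 and the Fréchet derivative of Δ_{r,U,V} at p vanishes. If ∂_r a(p,r) ≠ 0 for every r ∈ I, then D_x k(p,r) = 0 for every r ∈ I. -/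
/-- The defect of the isometry equation for a generalized conformal structure given
in coordinates by the family of bilinear forms `a(x,r)`, with candidate isometry `φ`
and fiber reparameterization `k`:
`Δ_{r,U,V}(x) = a(φ(x), k(x,r))(Dφ_x U, Dφ_x V) − a(x,r)(U,V)`. -/
noncomputable def gcsDelta (n : ℕ)
    (a : (Fin n → ℝ) → ℝ → ((Fin n → ℝ) →L[ℝ] (Fin n → ℝ) →L[ℝ] ℝ))
    (φ : (Fin n → ℝ) → (Fin n → ℝ)) (k : (Fin n → ℝ) → ℝ → ℝ)
    (r : ℝ) (U V : Fin n → ℝ) (x : Fin n → ℝ) : ℝ :=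
  a (φ x) (k x r) (fderiv ℝ φ x U) (fderiv ℝ φ x V) - a x r U V

/-- Chain rule in the second variable. -/
theorem gcs_aux_snd {E F : Type*} [NormedAddCommGroup E] [NormedSpace ℝ E]
    [NormedAddCommGroup F] [NormedSpace ℝ F] (f : E → ℝ → F) (p : E) (r : ℝ)
    (A : E × ℝ →L[ℝ] F) (hA : HasFDerivAt (fun q : E × ℝ => f q.1 q.2) A (p, r)) :
    HasDerivAt (fun s => f p s) (A (0, 1)) r := by
  have h1 : HasDerivAt (fun s : ℝ => (p, s)) ((0 : E), (1 : ℝ)) r :=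
    (hasDerivAt_const r p).prodMk (hasDerivAt_id r)
  exact hA.comp_hasDerivAt (f := fun s : ℝ => (p, s)) r h1

/-- Chain rule along a curve of pairs. -/
theorem gcs_aux_pair {E F : Type*} [NormedAddCommGroup E] [NormedSpace ℝ E]
    [NormedAddCommGroup F] [NormedSpace ℝ F] (f : E → ℝ → F) (p : E) (r : ℝ)
    (A : E × ℝ →L[ℝ] F) (hA : HasFDerivAt (fun q : E × ℝ => f q.1 q.2) A (p, r))
    (φ : E → E) (k : E → ℝ) (L : E →L[ℝ] E) (K : E →L[ℝ] ℝ)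
    (hφ : HasFDerivAt φ L p) (hk : HasFDerivAt k K p) (hφp : φ p = p) (hkp : k p = r) :
    HasFDerivAt (fun x => f (φ x) (k x)) (A.comp (L.prod K)) p := by
  have h1 : HasFDerivAt (fun x => (φ x, k x)) (L.prod K) p := hφ.prodMk hk
  have e : (p, r) = (φ p, k p) := by rw [hφp, hkp]
  rw [e] at hA
  exact hA.comp (f := fun x => (φ x, k x)) p h1

/-- The core computation over an abstract normed space. -/
theorem gcs_aux_core {E : Type*} [NormedAddCommGroup E] [NormedSpace ℝ E]
    (a : E → ℝ → (E →L[ℝ] E →L[ℝ] ℝ)) (φ : E → E) (k : E → ℝ) (p : E) (r : ℝ)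
    (ha : DifferentiableAt ℝ (fun q : E × ℝ => a q.1 q.2) (p, r))
    (hk : DifferentiableAt ℝ k p) (hφ : DifferentiableAt ℝ φ p)
    (hφ' : DifferentiableAt ℝ (fderiv ℝ φ) p)
    (hφp : φ p = p) (hDφp : fderiv ℝ φ p = ContinuousLinearMap.id ℝ E)
    (hD2φp : fderiv ℝ (fderiv ℝ φ) p = 0) (hkp : k p = r)
    (hΔ' : ∀ U V : E, fderiv ℝ
      (fun x => a (φ x) (k x) (fderiv ℝ φ x U) (fderiv ℝ φ x V) - a x r U V) p = 0)
    (ha_r : deriv (fun s => a p s) r ≠ 0) : fderiv ℝ k p = 0 := by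
  have hA := ha.hasFDerivAt
  have hK := hk.hasFDerivAt
  have hφ1 := hφ.hasFDerivAt
  have hφ2 := hφ'.hasFDerivAt
  rw [hDφp] at hφ1
  rw [hD2φp] at hφ2
  generalize fderiv ℝ (fun q : E × ℝ => a q.1 q.2) (p, r) = A at hA
  generalize fderiv ℝ k p = K at hK ⊢
  have hD := gcs_aux_snd a p r A hA
  have hne : A (0, 1) ≠ 0 := by rw [← hD.deriv]; exact ha_r
  have hB := gcs_aux_pair a p r A hA (fun x => x) (fun _ => r) _ _
    (hasFDerivAt_id p) (hasFDerivAt_const r p) rfl rfl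
  have hC := gcs_aux_pair a p r A hA φ k _ _ hφ1 hK hφp hkp
  refine ContinuousLinearMap.ext fun W => ?_
  by_contra hW
  apply hne
  ext1 U
  ext1 V
  have hU : HasFDerivAt (fun x => fderiv ℝ φ x U) (0 : E →L[ℝ] E) p := by
    simpa using hφ2.clm_apply (hasFDerivAt_const U p)
  have hV : HasFDerivAt (fun x => fderiv ℝ φ x V) (0 : E →L[ℝ] E) p := by
    simpa using hφ2.clm_apply (hasFDerivAt_const V p)
  have hT := ((hC.clm_apply hU).clm_apply hV).sub
    ((hB.clm_apply (hasFDerivAt_const U p)).clm_apply (hasFDerivAt_const V p))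
  have h0 := hΔ' U V
  have h1 := hT.fderiv.symm.trans h0
  have h2 := congrArg (fun L => L W) h1
  simp [hDφp] at h2
  have h3 : A (W, K W) = A (W, 0) + K W • A (0, 1) := by
    rw [← map_smul, ← map_add]; simp
  rw [h3] at h2
  simp at h2
  exact h2.resolve_left hW

/-- If `φ` has trivial `2`-jet at `p` (`φ(p) = p`, `Dφ_p = id`, `D²φ_p = 0`),
`k(p,r) = r` on `I`, the isometry defect `Δ_{r,U,V}` vanishes at `p` together with its
first Fréchet derivative, and `∂_r a(p,r) ≠ 0` on `I`, then `D_x k(p,r) = 0` on `I`. -/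
theorem gcs_Dk_eq_zero
    (n : ℕ) (Ω : Set (Fin n → ℝ)) (hΩ : IsOpen Ω)
    (p : Fin n → ℝ) (hp : p ∈ Ω)
    (I : Set ℝ) (hIopen : IsOpen I) (hIconn : I.OrdConnected)
    (a : (Fin n → ℝ) → ℝ → ((Fin n → ℝ) →L[ℝ] (Fin n → ℝ) →L[ℝ] ℝ))
    (ha_smooth : ContDiffOn ℝ (⊤ : ℕ∞) (fun q : (Fin n → ℝ) × ℝ => a q.1 q.2) (Ω ×ˢ I))
    (ha_symm : ∀ x ∈ Ω, ∀ r ∈ I, ∀ U V : Fin n → ℝ, a x r U V = a x r V U)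
    (ha_pos : ∀ x ∈ Ω, ∀ r ∈ I, ∀ U : Fin n → ℝ, U ≠ 0 → 0 < a x r U U)
    (φ : (Fin n → ℝ) → (Fin n → ℝ)) (hφ : ContDiffOn ℝ (⊤ : ℕ∞) φ Ω)
    (k : (Fin n → ℝ) → ℝ → ℝ)
    (hk : ContDiffOn ℝ (⊤ : ℕ∞) (fun q : (Fin n → ℝ) × ℝ => k q.1 q.2) (Ω ×ˢ I))
    (hk_maps : ∀ x ∈ Ω, ∀ r ∈ I, k x r ∈ I)
    (hφp : φ p = p)
    (hDφp : fderiv ℝ φ p = ContinuousLinearMap.id ℝ (Fin n → ℝ))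
    (hD2φp : fderiv ℝ (fderiv ℝ φ) p = 0)
    (hkp : ∀ r ∈ I, k p r = r)
    (hΔ : ∀ r ∈ I, ∀ U V : Fin n → ℝ, gcsDelta n a φ k r U V p = 0)
    (hΔ' : ∀ r ∈ I, ∀ U V : Fin n → ℝ, fderiv ℝ (gcsDelta n a φ k r U V) p = 0)
    (ha_r : ∀ r ∈ I, deriv (fun s => a p s) r ≠ 0) :
    ∀ r ∈ I, fderiv ℝ (fun x => k x r) p = 0 := by
  intro r hr
  have hnhds : Ω ×ˢ I ∈ nhds (p, r) := (hΩ.prod hIopen).mem_nhds ⟨hp, hr⟩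
  have hK0 : DifferentiableAt ℝ (fun q : (Fin n → ℝ) × ℝ => k q.1 q.2) (p, r) :=
    (hk.contDiffAt hnhds).differentiableAt (by simp)
  have hK : DifferentiableAt ℝ (fun x => k x r) p :=
    (gcs_aux_pair k p r _ hK0.hasFDerivAt (fun x => x) (fun _ => r) _ _
      (hasFDerivAt_id p) (hasFDerivAt_const r p) rfl rfl).differentiableAt
  have hφc : ContDiffAt ℝ (⊤ : ℕ∞) φ p := hφ.contDiffAt (hΩ.mem_nhds hp)
  have hφ2 : ContDiffAt ℝ 1 (fderiv ℝ φ) p := hφc.fderiv_right (by norm_cast)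
  exact gcs_aux_core a φ (fun x => k x r) p r
    ((ha_smooth.contDiffAt hnhds).differentiableAt (by simp)) hK
    (hφc.differentiableAt (by simp)) (hφ2.differentiableAt (by simp))
    hφp hDφp hD2φp (hkp r hr) (fun U V => hΔ' r hr U V) (ha_r r hr)
end

section
/- Fix r ∈ I and suppose φ(p) = p, Dφ_p = id, D²φ_p = 0, k(p,r) = r, D_x k(p,r) = 0, and the second Fréchet derivative of Δ_{r,U,V} at p vanishes for all U, V ∈ ℝⁿ. Then for all U, V, W₁, W₂ ∈ ℝⁿ: a(p,r)(D³φ_p(U,W₁,W₂), V) + a(p,r)(U, D³φ_p(V,W₁,W₂)) = − D²_x k(p,r)(W₁,W₂) · ∂_r a(p,r)(U,V). -/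
open scoped ContDiff in
theorem gcs_second_deriv_comp {E F H : Type*} [NormedAddCommGroup E] [NormedSpace ℝ E]
    [NormedAddCommGroup F] [NormedSpace ℝ F] [NormedAddCommGroup H] [NormedSpace ℝ H]
    (G : F → H) (ψ : E → F) (p : E) (hG : ContDiffAt ℝ ∞ G (ψ p)) (hψ : ContDiffAt ℝ ∞ ψ p)
    (w₁ w₂ : E) :
    fderiv ℝ (fderiv ℝ (fun x => G (ψ x))) p w₁ w₂ =
      fderiv ℝ (fderiv ℝ G) (ψ p) (fderiv ℝ ψ p w₁) (fderiv ℝ ψ p w₂)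
        + fderiv ℝ G (ψ p) (fderiv ℝ (fderiv ℝ ψ) p w₁ w₂) := by
  have hGe : ∀ᶠ y in nhds (ψ p), DifferentiableAt ℝ G y :=
    ((hG.of_le (m := 1) (by simp)).eventually (by simp)).mono
      fun y hy => hy.differentiableAt (by simp)
  have hψe : ∀ᶠ y in nhds p, DifferentiableAt ℝ ψ y :=
    ((hψ.of_le (m := 1) (by simp)).eventually (by simp)).mono
      fun y hy => hy.differentiableAt (by simp)
  have he : fderiv ℝ (fun x => G (ψ x)) =ᶠ[nhds p]
      fun x => (fderiv ℝ G (ψ x)).comp (fderiv ℝ ψ x) := by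
    filter_upwards [hψ.continuousAt.eventually hGe, hψe] with x h1 h2
    exact fderiv_comp x h1 h2
  have dG : DifferentiableAt ℝ (fderiv ℝ G) (ψ p) :=
    (hG.fderiv_right (m := ∞) (by simp)).differentiableAt (by simp)
  have dψ : DifferentiableAt ℝ (fderiv ℝ ψ) p :=
    (hψ.fderiv_right (m := ∞) (by simp)).differentiableAt (by simp)
  rw [he.fderiv_eq]
  have h1 : HasFDerivAt (fun x => fderiv ℝ G (ψ x)) _ p :=
    dG.hasFDerivAt.comp p hψe.self_of_nhds.hasFDerivAt
  rw [(h1.clm_comp dψ.hasFDerivAt).fderiv]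
  simp [add_comm]

open scoped ContDiff in
theorem gcs_second_deriv_clm {E F H : Type*} [NormedAddCommGroup E] [NormedSpace ℝ E]
    [NormedAddCommGroup F] [NormedSpace ℝ F] [NormedAddCommGroup H] [NormedSpace ℝ H]
    (G : F →L[ℝ] H) (ψ : E → F) (p : E) (hψ : ContDiffAt ℝ ∞ ψ p)
    (w₁ w₂ : E) :
    G (fderiv ℝ (fderiv ℝ ψ) p w₁ w₂) = fderiv ℝ (fderiv ℝ (fun x => G (ψ x))) p w₁ w₂ := by
  rw [gcs_second_deriv_comp G ψ p G.contDiff.contDiffAt hψ]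
  have : fderiv ℝ (G : F → H) = fun _ => G := by ext1 x; exact G.fderiv
  rw [this]; simp

open scoped ContDiff in
theorem gcs_third_symm {E F : Type*} [NormedAddCommGroup E] [NormedSpace ℝ E]
    [NormedAddCommGroup F] [NormedSpace ℝ F] 
    (φ : E → F) (p : E) (hφ : ContDiffAt ℝ ∞ φ p) (u w₁ w₂ : E) :
    fderiv ℝ (fderiv ℝ (fderiv ℝ φ)) p w₁ w₂ u = fderiv ℝ (fderiv ℝ (fderiv ℝ φ)) p u w₁ w₂ := by
  have h1 : ContDiffAt ℝ ∞ (fderiv ℝ φ) p := hφ.fderiv_right (by simp)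
  have h2 : ContDiffAt ℝ ∞ (fderiv ℝ (fderiv ℝ φ)) p := h1.fderiv_right (by simp)
  have d2 : DifferentiableAt ℝ (fderiv ℝ (fderiv ℝ φ)) p := h2.differentiableAt (by simp)
  have le2 : (2 : WithTop ℕ∞) ≤ ∞ :=
    WithTop.coe_le_coe.2 (le_top : (2 : ℕ∞) ≤ ⊤)
  have s1 := (h1.isSymmSndFDerivAt (by simpa using le2)) u w₁
  rw [s1]
  have key : ∀ s t : E, fderiv ℝ (fderiv ℝ (fderiv ℝ φ)) p w₁ s t
      = fderiv ℝ (fun x => fderiv ℝ (fderiv ℝ φ) x s t) p w₁ := by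
    intro s t
    have := (d2.hasFDerivAt.clm_apply (hasFDerivAt_const s p)).clm_apply (hasFDerivAt_const t p)
    rw [this.fderiv]; simp
  rw [key, key]
  have he : (fun x => fderiv ℝ (fderiv ℝ φ) x w₂ u) =ᶠ[nhds p]
      (fun x => fderiv ℝ (fderiv ℝ φ) x u w₂) := by
    filter_upwards [(hφ.of_le (m := 2) le2).eventually (by simp)] with x hx
    exact (hx.isSymmSndFDerivAt (by simp)) w₂ u
  rw [he.fderiv_eq]

theorem gcs_deriv_aux {E F : Type*} [NormedAddCommGroup E] [NormedSpace ℝ E]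
    [NormedAddCommGroup F] [NormedSpace ℝ F] (g : E × ℝ → F) (p : E) (r κ : ℝ)
    (hg : DifferentiableAt ℝ g (p, r)) :
    HasDerivAt (fun t : ℝ => g (p, r + t * κ)) (κ • deriv (fun s => g (p, s)) r) 0 := by
  have h : DifferentiableAt ℝ (fun s => g (p, s)) r :=
    DifferentiableAt.comp r (f := fun s : ℝ => (p, s)) hg (by fun_prop)
  have c2 : HasDerivAt (fun t : ℝ => r + t * κ) κ 0 := by
    simpa using ((hasDerivAt_id (0 : ℝ)).mul_const κ).const_add r
  exact HasDerivAt.scomp_of_eq (0 : ℝ) h.hasDerivAt c2 (by simp)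

set_option maxHeartbeats 1000000 in
/-- If `φ` has trivial `2`-jet at `p`, `k(p,r) = r`, `D_x k(p,r) = 0`, and the second
Fréchet derivative at `p` of the isometry defect `Δ_{r,U,V}` vanishes, then
`a(p,r)(D³φ_p(U,W₁,W₂), V) + a(p,r)(U, D³φ_p(V,W₁,W₂))
  = − D²_x k(p,r)(W₁,W₂) · ∂_r a(p,r)(U,V)`. -/
theorem gcs_third_jet_equation
    (n : ℕ) (Ω : Set (Fin n → ℝ)) (hΩ : IsOpen Ω)
    (p : Fin n → ℝ) (hp : p ∈ Ω)
    (I : Set ℝ) (hIopen : IsOpen I) (hIconn : I.OrdConnected)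
    (a : (Fin n → ℝ) → ℝ → ((Fin n → ℝ) →L[ℝ] (Fin n → ℝ) →L[ℝ] ℝ))
    (ha_smooth : ContDiffOn ℝ (⊤ : ℕ∞) (fun q : (Fin n → ℝ) × ℝ => a q.1 q.2) (Ω ×ˢ I))
    (ha_symm : ∀ x ∈ Ω, ∀ r ∈ I, ∀ U V : Fin n → ℝ, a x r U V = a x r V U)
    (ha_pos : ∀ x ∈ Ω, ∀ r ∈ I, ∀ U : Fin n → ℝ, U ≠ 0 → 0 < a x r U U)
    (φ : (Fin n → ℝ) → (Fin n → ℝ)) (hφ : ContDiffOn ℝ (⊤ : ℕ∞) φ Ω)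
    (k : (Fin n → ℝ) → ℝ → ℝ)
    (hk : ContDiffOn ℝ (⊤ : ℕ∞) (fun q : (Fin n → ℝ) × ℝ => k q.1 q.2) (Ω ×ˢ I))
    (hk_maps : ∀ x ∈ Ω, ∀ r ∈ I, k x r ∈ I)
    (r : ℝ) (hr : r ∈ I)
    (hφp : φ p = p)
    (hDφp : fderiv ℝ φ p = ContinuousLinearMap.id ℝ (Fin n → ℝ))
    (hD2φp : fderiv ℝ (fderiv ℝ φ) p = 0)
    (hkp : k p r = r)
    (hDk : fderiv ℝ (fun x => k x r) p = 0)
    (hΔ'' : ∀ U V : Fin n → ℝ,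
      fderiv ℝ (fderiv ℝ (gcsDelta n a φ k r U V)) p = 0) :
    ∀ U V W₁ W₂ : Fin n → ℝ,
      a p r (fderiv ℝ (fderiv ℝ (fderiv ℝ φ)) p U W₁ W₂) V
        + a p r U (fderiv ℝ (fderiv ℝ (fderiv ℝ φ)) p V W₁ W₂)
      = -(fderiv ℝ (fderiv ℝ (fun x => k x r)) p W₁ W₂)
          * deriv (fun s => a p s) r U V := by
  intro U V W₁ W₂
  have hΩp : Ω ∈ nhds p := hΩ.mem_nhds hp
  have hIr : I ∈ nhds r := hIopen.mem_nhds hr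
  have hA : ContDiffAt ℝ (⊤ : ℕ∞) (fun q : (Fin n → ℝ) × ℝ => a q.1 q.2) (p, r) :=
    ha_smooth.contDiffAt (prod_mem_nhds hΩp hIr)
  have hφ' : ContDiffAt ℝ (⊤ : ℕ∞) φ p := hφ.contDiffAt hΩp
  have hD : ContDiffAt ℝ (⊤ : ℕ∞) (fderiv ℝ φ) p := hφ'.fderiv_right (by simp)
  have hk' : ContDiffAt ℝ (⊤ : ℕ∞) (fun x => k x r) p :=
    (hk.contDiffAt (x := (p, r)) (prod_mem_nhds hΩp hIr)).comp p
      (contDiffAt_id.prodMk contDiffAt_const)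
  let G : (Fin n → ℝ) × ℝ × ((Fin n → ℝ) →L[ℝ] (Fin n → ℝ)) → ℝ :=
    fun q => a q.1 q.2.1 (q.2.2 U) (q.2.2 V)
  let ψ : (Fin n → ℝ) → (Fin n → ℝ) × ℝ × ((Fin n → ℝ) →L[ℝ] (Fin n → ℝ)) :=
    fun x => (φ x, k x r, fderiv ℝ φ x)
  let ι : (Fin n → ℝ) → (Fin n → ℝ) × ℝ × ((Fin n → ℝ) →L[ℝ] (Fin n → ℝ)) :=
    fun x => (x, r, ContinuousLinearMap.id ℝ _)
  have hψp : ψ p = (p, r, ContinuousLinearMap.id ℝ _) := by simp [ψ, hφp, hkp, hDφp]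
  have hA' : ContDiffAt ℝ (⊤ : ℕ∞)
      (fun q : (Fin n → ℝ) × ℝ × ((Fin n → ℝ) →L[ℝ] (Fin n → ℝ)) => a q.1 q.2.1)
      (p, r, ContinuousLinearMap.id ℝ _) :=
    hA.comp (p, r, ContinuousLinearMap.id ℝ (Fin n → ℝ))
      (f := fun q : (Fin n → ℝ) × ℝ × ((Fin n → ℝ) →L[ℝ] (Fin n → ℝ)) => (q.1, q.2.1))
      (by fun_prop)
  have hG : ContDiffAt ℝ (⊤ : ℕ∞) G (p, r, ContinuousLinearMap.id ℝ _) := by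
    refine (hA'.clm_apply ?_).clm_apply ?_ <;> fun_prop
  have hψ : ContDiffAt ℝ (⊤ : ℕ∞) ψ p := hφ'.prodMk (hk'.prodMk hD)
  have hι : ContDiffAt ℝ (⊤ : ℕ∞) ι p := contDiffAt_id.prodMk contDiffAt_const
  have hψ' : HasFDerivAt ψ (ContinuousLinearMap.inl ℝ (Fin n → ℝ)
      (ℝ × ((Fin n → ℝ) →L[ℝ] (Fin n → ℝ)))) p := by
    have h1 := (hφ'.differentiableAt (by simp)).hasFDerivAt
    have h2 := (hk'.differentiableAt (by simp)).hasFDerivAt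
    have h3 := (hD.differentiableAt (by simp)).hasFDerivAt
    rw [hDφp] at h1
    rw [hDk] at h2
    rw [hD2φp] at h3
    exact h1.prodMk (h2.prodMk h3)
  have hι' : ∀ x, HasFDerivAt ι (ContinuousLinearMap.inl ℝ (Fin n → ℝ)
      (ℝ × ((Fin n → ℝ) →L[ℝ] (Fin n → ℝ)))) x := fun x =>
    (hasFDerivAt_id x).prodMk (hasFDerivAt_const _ x)
  have hι'' : fderiv ℝ (fderiv ℝ ι) p = 0 := by
    have : fderiv ℝ ι = fun _ => ContinuousLinearMap.inl ℝ (Fin n → ℝ)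
      (ℝ × ((Fin n → ℝ) →L[ℝ] (Fin n → ℝ))) := funext fun x => (hι' x).fderiv
    rw [this]; simp
  have e1 := gcs_second_deriv_comp G ψ p (hψp ▸ hG) hψ W₁ W₂
  have e2 := gcs_second_deriv_comp G ι p hG hι W₁ W₂
  rw [hψ'.fderiv, hψp] at e1
  rw [(hι' p).fderiv, hι''] at e2
  have cψ : ContDiffAt ℝ (⊤ : ℕ∞) (fun x => G (ψ x)) p :=
    ContDiffAt.comp p (g := G) (f := ψ) (hψp ▸ hG) hψ
  have cι : ContDiffAt ℝ (⊤ : ℕ∞) (fun x => G (ι x)) p :=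
    ContDiffAt.comp p (g := G) (f := ι) hG hι
  have eΔ : fderiv ℝ (gcsDelta n a φ k r U V) =ᶠ[nhds p]
      fun x => fderiv ℝ (fun x => G (ψ x)) x - fderiv ℝ (fun x => G (ι x)) x := by
    filter_upwards [(cψ.of_le (m := 1) (by simp)).eventually (by simp),
      (cι.of_le (m := 1) (by simp)).eventually (by simp)] with x h1 h2
    exact fderiv_sub (h1.differentiableAt (by simp)) (h2.differentiableAt (by simp))
  have e3 := hΔ'' U V
  rw [eΔ.fderiv_eq, fderiv_fun_sub
    ((cψ.fderiv_right (m := (⊤ : ℕ∞)) (by simp)).differentiableAt (by simp))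
    ((cι.fderiv_right (m := (⊤ : ℕ∞)) (by simp)).differentiableAt (by simp))] at e3
  have e4 := congrArg (fun L => L W₁ W₂) e3
  simp only [sub_apply, zero_apply] at e4
  rw [e1, e2] at e4
  have m1 : (fderiv ℝ (fderiv ℝ ψ) p W₁ W₂).1 = 0 := by
    refine (gcs_second_deriv_clm (ContinuousLinearMap.fst ℝ _ _) ψ p hψ W₁ W₂).trans ?_
    change fderiv ℝ (fderiv ℝ φ) p W₁ W₂ = 0
    rw [hD2φp]; simp
  have m2 : (fderiv ℝ (fderiv ℝ ψ) p W₁ W₂).2.1 =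
      fderiv ℝ (fderiv ℝ (fun x => k x r)) p W₁ W₂ :=
    gcs_second_deriv_clm ((ContinuousLinearMap.fst ℝ ℝ ((Fin n → ℝ) →L[ℝ] (Fin n → ℝ))).comp
      (ContinuousLinearMap.snd ℝ (Fin n → ℝ) (ℝ × ((Fin n → ℝ) →L[ℝ] (Fin n → ℝ))))) ψ p hψ W₁ W₂
  have m3 : (fderiv ℝ (fderiv ℝ ψ) p W₁ W₂).2.2 =
      fderiv ℝ (fderiv ℝ (fderiv ℝ φ)) p W₁ W₂ :=
    gcs_second_deriv_clm ((ContinuousLinearMap.snd ℝ ℝ ((Fin n → ℝ) →L[ℝ] (Fin n → ℝ))).comp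
      (ContinuousLinearMap.snd ℝ (Fin n → ℝ) (ℝ × ((Fin n → ℝ) →L[ℝ] (Fin n → ℝ))))) ψ p hψ W₁ W₂
  have hm : fderiv ℝ (fderiv ℝ ψ) p W₁ W₂ =
      (0, fderiv ℝ (fderiv ℝ (fun x => k x r)) p W₁ W₂,
        fderiv ℝ (fderiv ℝ (fderiv ℝ φ)) p W₁ W₂) :=
    Prod.ext m1 (Prod.ext m2 m3)
  rw [hm] at e4
  -- the first derivative of `G`
  have dG : ∀ (κ : ℝ) (M : (Fin n → ℝ) →L[ℝ] (Fin n → ℝ)),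
      fderiv ℝ G (p, r, ContinuousLinearMap.id ℝ _) (0, κ, M) =
        κ * deriv (fun s => a p s) r U V + (a p r (M U) V + a p r U (M V)) := by
    intro κ M
    have c : HasDerivAt (fun t : ℝ => ((p, r + t * κ, ContinuousLinearMap.id ℝ _ + t • M) :
        (Fin n → ℝ) × ℝ × ((Fin n → ℝ) →L[ℝ] (Fin n → ℝ)))) (0, κ, M) 0 := by
      refine (hasDerivAt_const _ _).prodMk (HasDerivAt.prodMk ?_ ?_)
      · simpa using ((hasDerivAt_id (0 : ℝ)).mul_const κ).const_add r
      · simpa using ((hasDerivAt_id (0 : ℝ)).smul_const M).const_add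
          (ContinuousLinearMap.id ℝ (Fin n → ℝ))
    have hd := (hG.differentiableAt (by simp)).hasFDerivAt
    have l1 := HasFDerivAt.comp_hasDerivAt_of_eq (0 : ℝ) hd c (by simp)
    have l2 : HasDerivAt (fun t : ℝ => a p (r + t * κ)) (κ • deriv (fun s => a p s) r) 0 :=
      gcs_deriv_aux (fun q : (Fin n → ℝ) × ℝ => a q.1 q.2) p r κ (hA.differentiableAt (by simp))
    have lin : ∀ Z : Fin n → ℝ, HasDerivAt (fun t : ℝ => Z + t • M Z) (M Z) 0 := by
      intro Z
      simpa using ((hasDerivAt_id (0 : ℝ)).smul_const (M Z)).const_add Z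
    have l3 := (l2.clm_apply (lin U)).clm_apply (lin V)
    have := l1.unique (l3.congr_of_eventuallyEq (Filter.Eventually.of_forall fun t => by
      simp [G]))
    rw [this]
    simp
    ring
  rw [dG] at e4
  rw [← gcs_third_symm φ p hφ' U W₁ W₂, ← gcs_third_symm φ p hφ' V W₁ W₂]
  have hιp : ι p = (p, r, ContinuousLinearMap.id ℝ _) := rfl
  rw [hιp] at e4
  simp only [zero_apply, map_zero] at e4
  linarith
end

section
/- Generalized Liouville Theorem (local coordinate form): Assume n ≥ 3. Suppose the map r ↦ a(p,r) is injective on I and that ∂_r a(p,r) is a nondegenerate bilinear form on ℝⁿ for every r ∈ I (genericity). Suppose φ(p) = p, Dφ_p = id, D²φ_p = 0, and for every r ∈ I and all U, V ∈ ℝⁿ the function Δ_{r,U,V} vanishes at p together with its first and second Fréchet derivatives. Then D³φ_p = 0. (A 3-isometry of a generic generalized conformal structure with trivial 2-jet at p has trivial 3-jet at p, i.e., generic generalized conformal structures in dimension ≥ 3 are 2-rigid.) -/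
open scoped ContDiff Topology

section Calc
variable {E F G : Type*} [NormedAddCommGroup E] [NormedSpace ℝ E]
  [NormedAddCommGroup F] [NormedSpace ℝ F] [NormedAddCommGroup G] [NormedSpace ℝ G]

lemma gl_ev_diff {g : E → F} {p : E} (hg : ContDiffAt ℝ ∞ g p) :
    ∀ᶠ x in 𝓝 p, DifferentiableAt ℝ g x := by
  have h2 : ContDiffAt ℝ 1 g p := hg.of_le (by exact_mod_cast le_top)
  filter_upwards [h2.eventually (by simp)] with x hx
  exact hx.differentiableAt (by simp)

lemma gl_cd_fderiv {g : E → F} {p : E} (hg : ContDiffAt ℝ ∞ g p) :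
    ContDiffAt ℝ ∞ (fderiv ℝ g) p := hg.fderiv_right (by simp)

lemma gl_diff {g : E → F} {p : E} (hg : ContDiffAt ℝ ∞ g p) :
    DifferentiableAt ℝ g p := hg.differentiableAt (by simp)

lemma gl_comp2 {f : F → G} {g : E → F} {p : E} (hf : ContDiffAt ℝ ∞ f (g p))
    (hg : ContDiffAt ℝ ∞ g p) (X Y : E) :
    fderiv ℝ (fderiv ℝ (fun x => f (g x))) p X Y
      = fderiv ℝ (fderiv ℝ f) (g p) (fderiv ℝ g p X) (fderiv ℝ g p Y)
        + fderiv ℝ f (g p) (fderiv ℝ (fderiv ℝ g) p X Y) := by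
  have h1 : fderiv ℝ (fun x => f (g x)) =ᶠ[𝓝 p]
      fun x => (fderiv ℝ f (g x)).comp (fderiv ℝ g x) := by
    filter_upwards [hg.continuousAt.eventually (gl_ev_diff hf), gl_ev_diff hg] with x h1 h2
    exact fderiv_comp x h1 h2
  rw [h1.fderiv_eq]
  have h2 : HasFDerivAt (fun x => fderiv ℝ f (g x))
      ((fderiv ℝ (fderiv ℝ f) (g p)).comp (fderiv ℝ g p)) p :=
    HasFDerivAt.comp p (gl_diff (gl_cd_fderiv hf)).hasFDerivAt (gl_diff hg).hasFDerivAt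
  have h3 := (gl_diff (gl_cd_fderiv hg)).hasFDerivAt
  rw [(h2.clm_comp h3).fderiv]
  simp [add_comm]

lemma gl_lin2 (L : F →L[ℝ] G) {g : E → F} {p : E}
    (hg : ContDiffAt ℝ ∞ g p) (X Y : E) :
    fderiv ℝ (fderiv ℝ (fun x => L (g x))) p X Y = L (fderiv ℝ (fderiv ℝ g) p X Y) := by
  rw [gl_comp2 (f := fun y => L y) L.contDiff.contDiffAt hg]
  have : fderiv ℝ (fun y => L y) = fun _ => L := by ext1 y; exact L.fderiv
  rw [this]; simp

lemma gl_prod2 {u : E → F} {v : E → G} {p : E}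
    (hu : ContDiffAt ℝ ∞ u p) (hv : ContDiffAt ℝ ∞ v p) (X Y : E) :
    fderiv ℝ (fderiv ℝ (fun x => (u x, v x))) p X Y
      = (fderiv ℝ (fderiv ℝ u) p X Y, fderiv ℝ (fderiv ℝ v) p X Y) := by
  have h := hu.prodMk hv
  have h1 := gl_lin2 (ContinuousLinearMap.fst ℝ F G) h X Y
  have h2 := gl_lin2 (ContinuousLinearMap.snd ℝ F G) h X Y
  exact Prod.ext h1.symm h2.symm

lemma gl_two_le : (2 : WithTop ℕ∞) ≤ ∞ :=
  WithTop.coe_le_coe.mpr (le_top : (2 : ℕ∞) ≤ ⊤)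

lemma gl_symm2 {g : E → F} {p : E} (hg : ContDiffAt ℝ ∞ g p) (X Y : E) :
    fderiv ℝ (fderiv ℝ g) p X Y = fderiv ℝ (fderiv ℝ g) p Y X :=
  (hg.isSymmSndFDerivAt (by simpa using gl_two_le)) X Y

lemma gl_symm3 {g : E → F} {p : E} (hg : ContDiffAt ℝ ∞ g p) (X Y U : E) :
    fderiv ℝ (fderiv ℝ (fderiv ℝ g)) p X Y U = fderiv ℝ (fderiv ℝ (fderiv ℝ g)) p X U Y := by
  have h0 := (gl_diff (gl_cd_fderiv (gl_cd_fderiv hg))).hasFDerivAt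
  have key : ∀ Y U : E, HasFDerivAt (fun x => fderiv ℝ (fderiv ℝ g) x Y U)
      (((ContinuousLinearMap.apply ℝ F U).comp (ContinuousLinearMap.apply ℝ (E →L[ℝ] F) Y)).comp
        (fderiv ℝ (fderiv ℝ (fderiv ℝ g)) p)) p := fun Y U => by
    have h1 := (ContinuousLinearMap.apply ℝ (E →L[ℝ] F) Y).hasFDerivAt.comp p h0
    have h2 := (ContinuousLinearMap.apply ℝ F U).hasFDerivAt.comp p h1
    exact h2
  have h2 : ContDiffAt ℝ 2 g p := hg.of_le gl_two_le
  have hev : (fun x => fderiv ℝ (fderiv ℝ g) x U Y) =ᶠ[𝓝 p]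
      (fun x => fderiv ℝ (fderiv ℝ g) x Y U) := by
    filter_upwards [h2.eventually (by simp)] with x hx
    exact (hx.isSymmSndFDerivAt (by simp)) U Y
  have := (key Y U).unique ((key U Y).congr_of_eventuallyEq hev.symm)
  simpa using congrArg (fun L => L X) this

end Calc

section Alg
variable {n : ℕ}

lemma gl_KN (hn : 3 ≤ n) (b H : (Fin n → ℝ) →L[ℝ] (Fin n → ℝ) →L[ℝ] ℝ)
    (hb : ∀ U, (∀ V, b U V = 0) → U = 0) 
    (hKN : ∀ X Y U V, H X U * b Y V + H Y V * b X U = H X V * b Y U + H Y U * b X V)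
    (hbs : ∀ U V, b U V = b V U) (hHs : ∀ U V, H U V = H V U) : H = 0 := by
  classical
  set e : Fin n → (Fin n → ℝ) := fun i => Pi.single i 1 with he
  let B : Matrix (Fin n) (Fin n) ℝ := Matrix.of fun i j => b (e i) (e j)
  let M : Matrix (Fin n) (Fin n) ℝ := Matrix.of fun i j => H (e i) (e j)
  have hdet : B.det ≠ 0 := by
    intro h0
    obtain ⟨v, hv, hBv⟩ := Matrix.exists_mulVec_eq_zero_iff.mpr h0
    apply hv
    apply hb
    have hv' : ∀ i, b v (e i) = 0 := by
      intro i
      have h1 := congrFun hBv i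
      have h2 : v = ∑ j, v j • e j := by
        have := (Pi.basisFun ℝ (Fin n)).sum_repr v
        simpa [he] using this.symm
      rw [hbs, h2, map_sum]
      simpa [Matrix.mulVec, dotProduct, B, mul_comm] using h1
    intro V
    have h2 : V = ∑ j, V j • e j := by
      have := (Pi.basisFun ℝ (Fin n)).sum_repr V
      simpa [he] using this.symm
    rw [h2, map_sum]
    simp [hv']
  have hu : IsUnit B.det := isUnit_iff_ne_zero.mpr hdet
  have hBC := Matrix.mul_nonsing_inv B hu
  have hCB := Matrix.nonsing_inv_mul B hu
  set C := B⁻¹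
  have hBt : ∀ i j, B i j = B j i := fun i j => hbs _ _
  have hMt : ∀ i j, M i j = M j i := fun i j => hHs _ _
  have rel : ∀ i j u l, M i u * B j l + M j l * B i u = M i l * B j u + M j u * B i l :=
    fun i j u l => hKN _ _ _ _
  have tr : ((n : ℝ) - 2) • M = - (Matrix.trace (M * C)) • B := by
    ext i u
    have h1 : ∑ j, ∑ l, (M i u * B j l + M j l * B i u) * C l j
        = ∑ j, ∑ l, (M i l * B j u + M j u * B i l) * C l j := by
      simp only [rel]
    have e1 : ∑ j, ∑ l, (M i u * B j l + M j l * B i u) * C l j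
        = M i u * Matrix.trace (B * C) + Matrix.trace (M * C) * B i u := by
      simp only [Matrix.trace, Matrix.diag, Matrix.mul_apply, Finset.mul_sum, Finset.sum_mul,
        ← Finset.sum_add_distrib]
      refine Finset.sum_congr rfl fun j _ => Finset.sum_congr rfl fun l _ => by ring
    have e2 : ∑ j, ∑ l, (M i l * B j u + M j u * B i l) * C l j
        = (M * C * B) i u + (B * C * M) i u := by
      simp only [Matrix.mul_apply, Finset.sum_mul, ← Finset.sum_add_distrib]
      refine Finset.sum_congr rfl fun j _ => Finset.sum_congr rfl fun l _ => by ring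
    rw [e1, e2, hBC, Matrix.mul_assoc, hCB, Matrix.mul_one, Matrix.one_mul, Matrix.trace_one] at h1
    simp only [Fintype.card_fin] at h1
    simp only [Matrix.smul_apply, smul_eq_mul]
    linarith
  have hn' : (3 : ℝ) ≤ n := by exact_mod_cast hn
  have tr0 : Matrix.trace (M * C) = 0 := by
    have := congrArg (fun Z => Matrix.trace (Z * C)) tr
    simp only [Matrix.smul_mul, Matrix.trace_smul, hBC, Matrix.trace_one, Fintype.card_fin,
      smul_eq_mul] at this
    have h3 : (2 * (n : ℝ) - 2) * Matrix.trace (M * C) = 0 := by linarith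
    rcases mul_eq_zero.mp h3 with h | h
    · linarith
    · exact h
  have hM : M = 0 := by
    rw [tr0] at tr
    simp only [neg_zero, zero_smul] at tr
    rcases smul_eq_zero.mp tr with h | h
    · linarith
    · exact h
  have hM' : ∀ i j, H (e i) (e j) = 0 := fun i j => congrFun (congrFun hM i) j
  have hsum : ∀ V : Fin n → ℝ, V = ∑ j, V j • e j := fun V => by
    have := (Pi.basisFun ℝ (Fin n)).sum_repr V
    simpa [he] using this.symm
  refine ContinuousLinearMap.ext fun U => ContinuousLinearMap.ext fun V => ?_
  rw [hsum U, hsum V]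
  simp [map_sum, hM']

lemma gl_alg (hn : 3 ≤ n) (a b H : (Fin n → ℝ) →L[ℝ] (Fin n → ℝ) →L[ℝ] ℝ)
    (T : (Fin n → ℝ) →L[ℝ] (Fin n → ℝ) →L[ℝ] (Fin n → ℝ) →L[ℝ] (Fin n → ℝ))
    (has : ∀ U V, a U V = a V U) (hpos : ∀ U, U ≠ 0 → 0 < a U U)
    (hb : ∀ U, (∀ V, b U V = 0) → U = 0) (hbs : ∀ U V, b U V = b V U)
    (hHs : ∀ U V, H U V = H V U)
    (hT1 : ∀ X Y U, T X Y U = T Y X U) (hT2 : ∀ X Y U, T X Y U = T X U Y)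
    (heq : ∀ X Y U V, H X Y * b U V + a (T X Y U) V + a U (T X Y V) = 0) : T = 0 := by
  have hS : ∀ X Y U V, 2 * a (T X Y U) V
      = - (H X Y * b U V) - H X U * b Y V + H X V * b Y U := by
    intro X Y U V
    have h1 := heq X Y U V
    have h2 := heq X U Y V
    have h3 := heq X V Y U
    rw [hT2 X U Y, has Y] at h2
    rw [hT2 X V Y, hT2 X V U, has Y] at h3
    rw [has U] at h1
    linarith
  have hH : H = 0 := by
    refine gl_KN hn b H hb ?_ hbs hHs
    intro X Y U V
    have h1 := hS X Y U V
    have h2 := hS Y X U V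
    rw [hT1 Y X, hHs Y X] at h2
    linarith
  refine ContinuousLinearMap.ext fun X => ContinuousLinearMap.ext fun Y =>
    ContinuousLinearMap.ext fun U => ?_
  by_contra hne
  have h1 := hpos _ hne
  have h2 := hS X Y U (T X Y U)
  simp only [hH, ContinuousLinearMap.zero_apply] at h2
  linarith
end Alg


set_option maxHeartbeats 2000000 in
/-- **Generalized Liouville Theorem (local coordinate form).** In dimension `n ≥ 3`,
for a generic generalized conformal structure (the curve `r ↦ a(p,r)` is injective and
`∂_r a(p,r)` is nondegenerate on `I`), a `3`-isometry `φ` (with shift `k`) having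
trivial `2`-jet at `p` has trivial `3`-jet at `p`: `D³φ_p = 0`. Generic generalized
conformal structures in dimension `≥ 3` are `2`-rigid. -/
theorem generalized_liouville
    (n : ℕ) (hn : 3 ≤ n) (Ω : Set (Fin n → ℝ)) (hΩ : IsOpen Ω)
    (p : Fin n → ℝ) (hp : p ∈ Ω)
    (I : Set ℝ) (hIopen : IsOpen I) (hIconn : I.OrdConnected)
    (hInonempty : I.Nonempty)
    (a : (Fin n → ℝ) → ℝ → ((Fin n → ℝ) →L[ℝ] (Fin n → ℝ) →L[ℝ] ℝ))
    (ha_smooth : ContDiffOn ℝ (⊤ : ℕ∞) (fun q : (Fin n → ℝ) × ℝ => a q.1 q.2) (Ω ×ˢ I))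
    (ha_symm : ∀ x ∈ Ω, ∀ r ∈ I, ∀ U V : Fin n → ℝ, a x r U V = a x r V U)
    (ha_pos : ∀ x ∈ Ω, ∀ r ∈ I, ∀ U : Fin n → ℝ, U ≠ 0 → 0 < a x r U U)
    (ha_inj : Set.InjOn (fun r => a p r) I)
    (ha_generic : ∀ r ∈ I, ∀ U : Fin n → ℝ,
      (∀ V : Fin n → ℝ, deriv (fun s => a p s) r U V = 0) → U = 0)
    (φ : (Fin n → ℝ) → (Fin n → ℝ)) (hφ : ContDiffOn ℝ (⊤ : ℕ∞) φ Ω)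
    (k : (Fin n → ℝ) → ℝ → ℝ)
    (hk : ContDiffOn ℝ (⊤ : ℕ∞) (fun q : (Fin n → ℝ) × ℝ => k q.1 q.2) (Ω ×ˢ I))
    (hk_maps : ∀ x ∈ Ω, ∀ r ∈ I, k x r ∈ I)
    (hφp : φ p = p)
    (hDφp : fderiv ℝ φ p = ContinuousLinearMap.id ℝ (Fin n → ℝ))
    (hD2φp : fderiv ℝ (fderiv ℝ φ) p = 0)
    (hΔ : ∀ r ∈ I, ∀ U V : Fin n → ℝ, gcsDelta n a φ k r U V p = 0)
    (hΔ' : ∀ r ∈ I, ∀ U V : Fin n → ℝ, fderiv ℝ (gcsDelta n a φ k r U V) p = 0)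
    (hΔ'' : ∀ r ∈ I, ∀ U V : Fin n → ℝ,
      fderiv ℝ (fderiv ℝ (gcsDelta n a φ k r U V)) p = 0) :
    fderiv ℝ (fderiv ℝ (fderiv ℝ φ)) p = 0 := by

  obtain ⟨r, hr⟩ := hInonempty
  have hmem : Ω ×ˢ I ∈ 𝓝 (p, r) := (hΩ.prod hIopen).mem_nhds ⟨hp, hr⟩
  have hA : ContDiffAt ℝ ∞ (fun q : (Fin n → ℝ) × ℝ => a q.1 q.2) (p, r) :=
    ha_smooth.contDiffAt hmem
  have hφ' : ContDiffAt ℝ ∞ φ p := hφ.contDiffAt (hΩ.mem_nhds hp)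
  have hκ : ContDiffAt ℝ ∞ (fun x => k x r) p :=
    (hk.contDiffAt hmem).comp p (f := fun x => (x, r)) (contDiffAt_id.prodMk contDiffAt_const)
  have hkp : k p r = r := by
    refine ha_inj (hk_maps p hp r hr) hr ?_
    ext U V
    have := hΔ r hr U V
    simp only [gcsDelta, hφp, hDφp, ContinuousLinearMap.id_apply] at this
    simpa [sub_eq_zero] using sub_eq_zero.mp this
  -- the derivative in `r`
  have hb : HasDerivAt (fun s => a p s) (deriv (fun s => a p s) r) r := by
    have : ContDiffAt ℝ ∞ (fun s => a p s) r :=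
      hA.comp r (f := fun s => (p, s)) (contDiffAt_const.prodMk contDiffAt_id)
    exact (gl_diff this).hasDerivAt
  set b := deriv (fun s => a p s) r with hbdef
  have hbUV : ∀ U V, HasDerivAt (fun s => a p s U V) (b U V) r := fun U V => by
    have := (hb.clm_apply (hasDerivAt_const r U)).clm_apply (hasDerivAt_const r V)
    simpa using this
  have hbs : ∀ U V, b U V = b V U := fun U V => by
    refine (hbUV U V).unique ((hbUV V U).congr_of_eventuallyEq ?_)
    filter_upwards [hIopen.mem_nhds hr] with s hs
    exact ha_symm p hp s hs U V
  have hgen := ha_generic r hr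
  rw [← hbdef] at hgen
  -- the universal function
  let Φ : (((Fin n → ℝ) × ℝ) × ((Fin n → ℝ) × (Fin n → ℝ))) → ℝ :=
    fun z => a z.1.1 z.1.2 z.2.1 z.2.2
  have hΦ : ∀ U V, ContDiffAt ℝ ∞ Φ ((p, r), (U, V)) := fun U V => by
    have h1 : ContDiffAt ℝ ∞ (fun z : ((Fin n → ℝ) × ℝ) × ((Fin n → ℝ) × (Fin n → ℝ)) =>
        a z.1.1 z.1.2) ((p, r), (U, V)) :=
      hA.comp ((p, r), (U, V)) (f := Prod.fst) contDiffAt_fst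
    exact (h1.clm_apply (contDiffAt_fst.comp _ contDiffAt_snd)).clm_apply
      (contDiffAt_snd.comp _ contDiffAt_snd)
  -- its derivative in vertical directions
  have hDΦ : ∀ U V (c : ℝ) (U' V' : Fin n → ℝ),
      fderiv ℝ Φ ((p, r), (U, V)) ((0, c), (U', V')) = c * b U V + a p r U' V + a p r U V' := by
    intro U V c U' V'
    have hc : HasDerivAt (fun t : ℝ => ((p, r + t * c), (U + t • U', V + t • V')))
        ((0, c), (U', V')) (0 : ℝ) := by
      have h1 : HasDerivAt (fun t : ℝ => r + t * c) c 0 := by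
        simpa using ((hasDerivAt_id (0 : ℝ)).mul_const c).const_add r
      have h2 : ∀ W W' : Fin n → ℝ, HasDerivAt (fun t : ℝ => W + t • W') W' 0 := fun W W' => by
        simpa using ((hasDerivAt_id (0 : ℝ)).smul_const W').const_add W
      exact ((hasDerivAt_const 0 p).prodMk h1).prodMk ((h2 U U').prodMk (h2 V V'))
    have hF : HasFDerivAt Φ (fderiv ℝ Φ ((p, r), (U, V)))
        ((fun t : ℝ => ((p, r + t * c), (U + t • U', V + t • V'))) 0) := by
      simpa using (gl_diff (hΦ U V)).hasFDerivAt
    have e1 := hF.comp_hasDerivAt (0 : ℝ) hc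
    have h1 : HasDerivAt (fun t : ℝ => r + t * c) c 0 := by
      simpa using ((hasDerivAt_id (0 : ℝ)).mul_const c).const_add r
    have h2 : ∀ W W' : Fin n → ℝ, HasDerivAt (fun t : ℝ => W + t • W') W' 0 := fun W W' => by
      simpa using ((hasDerivAt_id (0 : ℝ)).smul_const W').const_add W
    have hb0 : HasDerivAt (fun s => a p s) b ((fun t : ℝ => r + t * c) 0) := by
      simpa using hb
    have h3 : HasDerivAt (fun t : ℝ => a p (r + t * c)) (c • b) 0 :=
      HasDerivAt.scomp (g₁ := fun s => a p s) (h := fun t : ℝ => r + t * c) (0 : ℝ) hb0 h1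
    have e2 := (h3.clm_apply (h2 U U')).clm_apply (h2 V V')
    have := e1.unique e2
    simpa using this
  -- the two curves
  let g1 : (Fin n → ℝ) → (Fin n → ℝ) → (Fin n → ℝ) →
      (((Fin n → ℝ) × ℝ) × ((Fin n → ℝ) × (Fin n → ℝ))) :=
    fun U V x => ((φ x, k x r), (fderiv ℝ φ x U, fderiv ℝ φ x V))
  let g2 : (Fin n → ℝ) → (Fin n → ℝ) → (Fin n → ℝ) →
      (((Fin n → ℝ) × ℝ) × ((Fin n → ℝ) × (Fin n → ℝ))) :=
    fun U V x => ((x, r), (U, V))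
  have hL : ∀ U, ContDiffAt ℝ ∞ (fun x => fderiv ℝ φ x U) p := fun U =>
    (gl_cd_fderiv hφ').clm_apply contDiffAt_const
  have hg1 : ∀ U V, ContDiffAt ℝ ∞ (g1 U V) p := fun U V =>
    (hφ'.prodMk hκ).prodMk ((hL U).prodMk (hL V))
  have hg2 : ∀ U V, ContDiffAt ℝ ∞ (g2 U V) p := fun U V =>
    (contDiffAt_id.prodMk contDiffAt_const).prodMk contDiffAt_const
  have hg1p : ∀ U V, g1 U V p = ((p, r), (U, V)) := fun U V => by
    simp [g1, hφp, hkp, hDφp]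
  have hg2p : ∀ U V, g2 U V p = ((p, r), (U, V)) := fun U V => rfl
  have hdelta : ∀ U V, gcsDelta n a φ k r U V = fun x => Φ (g1 U V x) - Φ (g2 U V x) :=
    fun U V => rfl
  have hΦ1 : ∀ U V, ContDiffAt ℝ ∞ Φ (g1 U V p) := fun U V => by rw [hg1p]; exact hΦ U V
  have hΦ2 : ∀ U V, ContDiffAt ℝ ∞ Φ (g2 U V p) := fun U V => by rw [hg2p]; exact hΦ U V
  have hc1 : ∀ U V, ContDiffAt ℝ ∞ (fun x => Φ (g1 U V x)) p := fun U V =>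
    (hΦ1 U V).comp p (hg1 U V)
  have hc2 : ∀ U V, ContDiffAt ℝ ∞ (fun x => Φ (g2 U V x)) p := fun U V =>
    (hΦ2 U V).comp p (hg2 U V)
  -- first derivatives
  have hLd : ∀ U X, fderiv ℝ (fun x => fderiv ℝ φ x U) p X = 0 := fun U X => by
    have h := (gl_diff (gl_cd_fderiv hφ')).hasFDerivAt.clm_apply (hasFDerivAt_const U p)
    rw [h.fderiv, hD2φp]; simp
  have hDg1 : ∀ U V X, fderiv ℝ (g1 U V) p X = ((X, fderiv ℝ (fun x => k x r) p X), (0, 0)) :=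
    fun U V X => by
    have h := ((gl_diff hφ').hasFDerivAt.prodMk (gl_diff hκ).hasFDerivAt).prodMk
      ((gl_diff (hL U)).hasFDerivAt.prodMk (gl_diff (hL V)).hasFDerivAt)
    have h' := h.fderiv
    change fderiv ℝ (g1 U V) p = _ at h'
    rw [h']
    simp [hLd, hDφp]
  have hDg2 : ∀ U V X, fderiv ℝ (g2 U V) p X = ((X, 0), (0, 0)) := fun U V X => by
    have h := ((hasFDerivAt_id (𝕜 := ℝ) p).prodMk (hasFDerivAt_const r p)).prodMk
      (hasFDerivAt_const (𝕜 := ℝ) (U, V) p)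
    have h' := h.fderiv
    change fderiv ℝ (g2 U V) p = _ at h'
    rw [h']
    rfl
  have hDk : ∀ X, fderiv ℝ (fun x => k x r) p X = 0 := by
    intro X
    have hmain : ∀ U V, fderiv ℝ (fun x => k x r) p X * b U V = 0 := by
      intro U V
      have h0 := congrArg (fun L => L X) (hΔ' r hr U V)
      rw [hdelta] at h0
      have h1 := ((hΦ1 U V |> gl_diff).hasFDerivAt.comp p (gl_diff (hg1 U V)).hasFDerivAt)
      have h2 := ((hΦ2 U V |> gl_diff).hasFDerivAt.comp p (gl_diff (hg2 U V)).hasFDerivAt)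
      have h3 := (h1.sub h2).fderiv
      change fderiv ℝ (fun x => Φ (g1 U V x) - Φ (g2 U V x)) p = _ at h3
      rw [h3, hg1p, hg2p] at h0
      simp only [ContinuousLinearMap.sub_apply, ContinuousLinearMap.comp_apply, hDg1, hDg2,
        ContinuousLinearMap.zero_apply] at h0
      rw [← map_sub] at h0
      simp only [Prod.mk_sub_mk, sub_self, sub_zero] at h0
      rw [hDΦ] at h0
      simpa using h0
    by_contra hne
    have hn0 : 0 < n := by omega
    have : (Pi.single ⟨0, hn0⟩ 1 : Fin n → ℝ) = 0 :=
      hgen _ fun V => (mul_eq_zero.mp (hmain _ V)).resolve_left hne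
    simpa using congrFun this ⟨0, hn0⟩
  -- second derivatives
  refine gl_alg hn (a p r) b (fderiv ℝ (fderiv ℝ (fun x => k x r)) p) _ (ha_symm p hp r hr)
    (ha_pos p hp r hr) hgen hbs (gl_symm2 hκ)
    (fun X Y U => by rw [gl_symm2 (gl_cd_fderiv hφ') X Y]) (gl_symm3 hφ') ?_
  intro X Y U V
  have hLL : ∀ U, fderiv ℝ (fderiv ℝ (fun x => fderiv ℝ φ x U)) p X Y
      = fderiv ℝ (fderiv ℝ (fderiv ℝ φ)) p X Y U := fun U =>
    gl_lin2 (ContinuousLinearMap.apply ℝ (Fin n → ℝ) U) (gl_cd_fderiv hφ') X Y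
  have hD2g1 : fderiv ℝ (fderiv ℝ (g1 U V)) p X Y
      = ((0, fderiv ℝ (fderiv ℝ (fun x => k x r)) p X Y),
        (fderiv ℝ (fderiv ℝ (fderiv ℝ φ)) p X Y U, fderiv ℝ (fderiv ℝ (fderiv ℝ φ)) p X Y V)) := by
    refine (gl_prod2 (hφ'.prodMk hκ) ((hL U).prodMk (hL V)) X Y).trans ?_
    rw [gl_prod2 hφ' hκ, gl_prod2 (hL U) (hL V), hLL, hLL, hD2φp]
    simp
  have hD2g2 : fderiv ℝ (fderiv ℝ (g2 U V)) p X Y = 0 := by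
    have : fderiv ℝ (g2 U V) = fun _ => ((ContinuousLinearMap.id ℝ (Fin n → ℝ)).prod 0).prod 0 := by
      ext1 x
      exact (((hasFDerivAt_id (𝕜 := ℝ) x).prodMk (hasFDerivAt_const r x)).prodMk
        (hasFDerivAt_const (𝕜 := ℝ) (U, V) x)).fderiv
    rw [this]; simp
  have h0 := congrArg (fun L => L X Y) (hΔ'' r hr U V)
  rw [hdelta] at h0
  have hev : fderiv ℝ (fun x => Φ (g1 U V x) - Φ (g2 U V x)) =ᶠ[𝓝 p]
      fun x => fderiv ℝ (fun x => Φ (g1 U V x)) x - fderiv ℝ (fun x => Φ (g2 U V x)) x := by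
    filter_upwards [gl_ev_diff (hc1 U V), gl_ev_diff (hc2 U V)] with x h1 h2
    exact fderiv_fun_sub h1 h2
  have hs := ((gl_diff (gl_cd_fderiv (hc1 U V))).hasFDerivAt.sub
    (gl_diff (gl_cd_fderiv (hc2 U V))).hasFDerivAt).congr_of_eventuallyEq hev
  rw [hs.fderiv] at h0
  simp only [ContinuousLinearMap.sub_apply, ContinuousLinearMap.zero_apply] at h0
  rw [gl_comp2 (hΦ1 U V) (hg1 U V), gl_comp2 (hΦ2 U V) (hg2 U V), hg1p, hg2p, hDg1, hDg1, hDg2,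
    hDg2, hDk, hDk, hD2g1, hD2g2, hDΦ] at h0
  simpa using h0
end

section
/- Suppose Ψ has trivial 1-jet at (p,r) and that for all U, V ∈ ℝᵐ × ℝ the function Δ_{U,V} vanishes at (p,r) together with its first Fréchet derivative. Then D²φ_{(p,r)} = 0. (A 2-isometry of a lightlike metric with trivial 1-jet has vanishing second derivative of its base component.) -/
/-- The defect of the isometry equation for the lightlike metric
`g_{(x,t)}(U,V) = a(x,t)(U_M, V_M)` on `M × I ⊆ ℝᵐ × ℝ` under a candidate isometry
`Ψ = (φ, δ)`:
`Δ_{U,V}(v) = a(Ψ(v))(Dφ_v U, Dφ_v V) − a(v)(U_M, V_M)`. -/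
noncomputable def lightDelta (m : ℕ)
    (a : (Fin m → ℝ) → ℝ → ((Fin m → ℝ) →L[ℝ] (Fin m → ℝ) →L[ℝ] ℝ))
    (φ : (Fin m → ℝ) × ℝ → (Fin m → ℝ)) (δ : (Fin m → ℝ) × ℝ → ℝ)
    (U V : (Fin m → ℝ) × ℝ) (v : (Fin m → ℝ) × ℝ) : ℝ :=
  a (φ v) (δ v) (fderiv ℝ φ v U) (fderiv ℝ φ v V) - a v.1 v.2 U.1 V.1

/-- A `2`-isometry `Ψ = (φ, δ)` of a lightlike metric with trivial `1`-jet at `(p,r)`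
has vanishing second derivative of its base component: `D²φ_{(p,r)} = 0`. -/
theorem lightlike_second_derivative_vanishes
    (m : ℕ) (hm : 1 ≤ m) (M : Set (Fin m → ℝ)) (hM : IsOpen M)
    (p : Fin m → ℝ) (hp : p ∈ M)
    (I : Set ℝ) (hIopen : IsOpen I) (hIconn : I.OrdConnected)
    (r : ℝ) (hr : r ∈ I)
    (a : (Fin m → ℝ) → ℝ → ((Fin m → ℝ) →L[ℝ] (Fin m → ℝ) →L[ℝ] ℝ))
    (ha_smooth : ContDiffOn ℝ (⊤ : ℕ∞) (fun q : (Fin m → ℝ) × ℝ => a q.1 q.2) (M ×ˢ I))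
    (ha_symm : ∀ x ∈ M, ∀ t ∈ I, ∀ U V : Fin m → ℝ, a x t U V = a x t V U)
    (ha_pos : ∀ x ∈ M, ∀ t ∈ I, ∀ U : Fin m → ℝ, U ≠ 0 → 0 < a x t U U)
    (φ : (Fin m → ℝ) × ℝ → (Fin m → ℝ)) (δ : (Fin m → ℝ) × ℝ → ℝ)
    (hΨ_smooth : ContDiffOn ℝ (⊤ : ℕ∞) (fun v => (φ v, δ v)) (M ×ˢ I))
    (hΨ_maps : ∀ v ∈ M ×ˢ I, (φ v, δ v) ∈ M ×ˢ I)
    (hΨp : (φ (p, r), δ (p, r)) = (p, r))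
    (hDΨp : fderiv ℝ (fun v => (φ v, δ v)) (p, r)
      = ContinuousLinearMap.id ℝ ((Fin m → ℝ) × ℝ))
    (hΔ : ∀ U V : (Fin m → ℝ) × ℝ, lightDelta m a φ δ U V (p, r) = 0)
    (hΔ' : ∀ U V : (Fin m → ℝ) × ℝ, fderiv ℝ (lightDelta m a φ δ U V) (p, r) = 0) :
    fderiv ℝ (fderiv ℝ φ) (p, r) = 0 := by
  have hmem : (p, r) ∈ M ×ˢ I := ⟨hp, hr⟩
  have hnhds : M ×ˢ I ∈ nhds (p, r) := (hM.prod hIopen).mem_nhds hmem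
  have hΨ : ContDiffAt ℝ (⊤ : ℕ∞) (fun v => (φ v, δ v)) (p, r) := hΨ_smooth.contDiffAt hnhds
  have ha : ContDiffAt ℝ (⊤ : ℕ∞) (fun q : (Fin m → ℝ) × ℝ => a q.1 q.2) (p, r) :=
    ha_smooth.contDiffAt hnhds
  have hφ : ContDiffAt ℝ (⊤ : ℕ∞) φ (p, r) := hΨ.fst
  have hsymm : IsSymmSndFDerivAt ℝ φ (p, r) := by
    apply hφ.isSymmSndFDerivAt
    simp only [minSmoothness_of_isRCLikeNormedField]
    exact WithTop.coe_le_coe.2 (le_top : (2 : ℕ∞) ≤ ⊤)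
  have hΨd : HasFDerivAt (fun v => (φ v, δ v))
      (ContinuousLinearMap.id ℝ ((Fin m → ℝ) × ℝ)) (p, r) := by
    rw [← hDΨp]
    exact (hΨ.differentiableAt (by simp)).hasFDerivAt
  have hφd : HasFDerivAt φ (ContinuousLinearMap.fst ℝ (Fin m → ℝ) ℝ) (p, r) := by
    have h := hΨd.fst
    simpa using h
  have hφe : fderiv ℝ φ (p, r) = ContinuousLinearMap.fst ℝ (Fin m → ℝ) ℝ := hφd.fderiv
  have hB : HasFDerivAt (fderiv ℝ φ) (fderiv ℝ (fderiv ℝ φ) (p, r)) (p, r) := by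
    have h : ContDiffAt ℝ 1 (fderiv ℝ φ) (p, r) :=
      hφ.fderiv_right (WithTop.coe_le_coe.2 (le_top : (1 + 1 : ℕ∞) ≤ ⊤))
    exact (h.differentiableAt (by simp)).hasFDerivAt
  have hA := (ha.differentiableAt (by simp)).hasFDerivAt
  set A := fderiv ℝ (fun q : (Fin m → ℝ) × ℝ => a q.1 q.2) (p, r) with hAdef
  set B := fderiv ℝ (fderiv ℝ φ) (p, r) with hBdef
  have hAΨ : HasFDerivAt (fun v => a (φ v) (δ v)) A (p, r) := by
    have hA' : HasFDerivAt (fun q : (Fin m → ℝ) × ℝ => a q.1 q.2) A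
        ((fun v => (φ v, δ v)) (p, r)) := by
      rw [show (fun v => (φ v, δ v)) (p, r) = (p, r) from hΨp]
      exact hA
    have h := HasFDerivAt.comp (g := fun q : (Fin m → ℝ) × ℝ => a q.1 q.2) (g' := A)
      (f := fun v => (φ v, δ v)) (p, r) hA' hΨd
    simpa [Function.comp_def] using h
  have hφp : φ (p, r) = p := congrArg Prod.fst hΨp
  have hδp : δ (p, r) = r := congrArg Prod.snd hΨp
  have key : ∀ W U V : (Fin m → ℝ) × ℝ, a p r (B W U) V.1 + a p r (B W V) U.1 = 0 := by
    intro W U V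
    have hBU : HasFDerivAt (fun v => fderiv ℝ φ v U) _ (p, r) :=
      hB.clm_apply (hasFDerivAt_const U (p, r))
    have hBV : HasFDerivAt (fun v => fderiv ℝ φ v V) _ (p, r) :=
      hB.clm_apply (hasFDerivAt_const V (p, r))
    have h1 := (hAΨ.clm_apply hBU).clm_apply hBV
    have h2 := (hA.clm_apply (hasFDerivAt_const U.1 (p, r))).clm_apply
      (hasFDerivAt_const V.1 (p, r))
    have h3 : HasFDerivAt (lightDelta m a φ δ U V) _ (p, r) := h1.sub h2
    have h4 := h3.fderiv
    rw [hΔ' U V] at h4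
    have h5 := congrArg (fun L => L W) h4
    simp [hφe, hφp, hδp] at h5
    rw [ha_symm p hp r hr (B W V) U.1]
    linarith
  have hs : ∀ U V, B U V = B V U := fun U V => hsymm U V
  have hT : ∀ W U V : (Fin m → ℝ) × ℝ, a p r (B W U) V.1 = 0 := by
    intro W U V
    have k1 := key W U V
    have k2 := key U W V
    have k3 := key V U W
    rw [hs U W] at k2
    rw [hs V U, hs V W] at k3
    linarith
  refine ContinuousLinearMap.ext fun W => ContinuousLinearMap.ext fun U => ?_
  by_contra hne
  have h := ha_pos p hp r hr (B W U) hne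
  have h' := hT W U (B W U, 0)
  exact absurd h' (ne_of_gt h)
end

section
/- Suppose Ψ has trivial 1-jet at (p,r), D²φ_{(p,r)} = 0, and for all U, V ∈ ℝᵐ × ℝ the function Δ_{U,V} vanishes at (p,r) together with its first and second Fréchet derivatives. Then for all U, V, W₁, W₂ ∈ ℝᵐ × ℝ: a(p,r)(D³φ_{(p,r)}(U,W₁,W₂), V_M) + a(p,r)(U_M, D³φ_{(p,r)}(V,W₁,W₂)) = − D²δ_{(p,r)}(W₁,W₂) · ∂_t a(p,r)(U_M, V_M). -/
section Helpers

set_option maxSynthPendingDepth 6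

variable {E G H : Type*} [NormedAddCommGroup E] [NormedSpace ℝ E]
  [NormedAddCommGroup G] [NormedSpace ℝ G] [NormedAddCommGroup H] [NormedSpace ℝ H]

/-- Second derivative applied to two vectors as an iterated directional derivative. -/
lemma lj_fderiv2_apply {f : E → H} {z : E} (hf : ContDiffAt ℝ 2 f z) (W' W : E) :
    fderiv ℝ (fderiv ℝ f) z W' W = fderiv ℝ (fun v => fderiv ℝ f v W) z W' := by
  have h : DifferentiableAt ℝ (fderiv ℝ f) z :=
    (hf.fderiv_right (m := 1) (by norm_num)).differentiableAt (by norm_num)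
  rw [fderiv_clm_apply h (differentiableAt_const W)]
  simp

lemma lj_differentiable_dir {f : E → H} {z : E} (hf : ContDiffAt ℝ 2 f z) (W : E) :
    DifferentiableAt ℝ (fun v => fderiv ℝ f v W) z := by
  have h : DifferentiableAt ℝ (fderiv ℝ f) z :=
    (hf.fderiv_right (m := 1) (by norm_num)).differentiableAt (by norm_num)
  exact h.clm_apply (differentiableAt_const W)

lemma lj_bil_fderiv {B : E → G →L[ℝ] G →L[ℝ] ℝ} {x y : E → G} {v : E}
    (hB : DifferentiableAt ℝ B v) (hx : DifferentiableAt ℝ x v) (hy : DifferentiableAt ℝ y v)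
    (W : E) :
    fderiv ℝ (fun v => B v (x v) (y v)) v W
      = fderiv ℝ B v W (x v) (y v) + B v (fderiv ℝ x v W) (y v)
        + B v (x v) (fderiv ℝ y v W) := by
  have h1 : DifferentiableAt ℝ (fun v => B v (x v)) v := hB.clm_apply hx
  rw [fderiv_clm_apply h1 hy, fderiv_clm_apply hB hx]
  simp
  ring

lemma lj_eventually_diff {f : E → H} {z : E} (hf : ContDiffAt ℝ 2 f z) :
    ∀ᶠ v in nhds z, DifferentiableAt ℝ f v := by
  filter_upwards [hf.eventually (by simp)] with v hv
  exact hv.differentiableAt (by norm_num)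

set_option synthInstance.maxHeartbeats 400000 in
set_option maxHeartbeats 1000000 in
lemma lj_bil_fderiv2 {B : E → G →L[ℝ] G →L[ℝ] ℝ} {x y : E → G} {z : E}
    (hB : ContDiffAt ℝ 2 B z) (hx : ContDiffAt ℝ 2 x z) (hy : ContDiffAt ℝ 2 y z)
    (hx0 : fderiv ℝ x z = 0) (hy0 : fderiv ℝ y z = 0) (W' W : E) :
    fderiv ℝ (fderiv ℝ (fun v => B v (x v) (y v))) z W' W
      = fderiv ℝ (fderiv ℝ B) z W' W (x z) (y z) + B z (fderiv ℝ (fderiv ℝ x) z W' W) (y z)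
        + B z (x z) (fderiv ℝ (fderiv ℝ y) z W' W) := by
  have hc : ContDiffAt ℝ 2 (fun v => B v (x v) (y v)) z := (hB.clm_apply hx).clm_apply hy
  have dB := hB.differentiableAt (by norm_num)
  have dx := hx.differentiableAt (by norm_num)
  have dy := hy.differentiableAt (by norm_num)
  have dB' := lj_differentiable_dir hB W
  have dx' := lj_differentiable_dir hx W
  have dy' := lj_differentiable_dir hy W
  have heq : (fun v => fderiv ℝ (fun v => B v (x v) (y v)) v W) =ᶠ[nhds z]
      fun v => fderiv ℝ B v W (x v) (y v) + B v (fderiv ℝ x v W) (y v)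
        + B v (x v) (fderiv ℝ y v W) := by
    filter_upwards [lj_eventually_diff hB, lj_eventually_diff hx, lj_eventually_diff hy]
      with v h1 h2 h3
    exact lj_bil_fderiv h1 h2 h3 W
  have e1 : DifferentiableAt ℝ (fun v => fderiv ℝ B v W (x v) (y v)) z :=
    (dB'.clm_apply dx).clm_apply dy
  have e2 : DifferentiableAt ℝ (fun v => B v (fderiv ℝ x v W) (y v)) z :=
    (dB.clm_apply dx').clm_apply dy
  have e3 : DifferentiableAt ℝ (fun v => B v (x v) (fderiv ℝ y v W)) z :=
    (dB.clm_apply dx).clm_apply dy'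
  rw [lj_fderiv2_apply hc, heq.fderiv_eq, fderiv_fun_add (e1.fun_add e2) e3, fderiv_fun_add e1 e2]
  simp only [ContinuousLinearMap.add_apply]
  rw [lj_bil_fderiv dB' dx dy, lj_bil_fderiv dB dx' dy, lj_bil_fderiv dB dx dy']
  rw [lj_fderiv2_apply hB, lj_fderiv2_apply hx, lj_fderiv2_apply hy]
  simp [hx0, hy0]

/-- Second derivative of a composition with a map tangent to the identity. -/
lemma lj_comp_fderiv2 {A : E → H} {Ψ : E → E} {z : E}
    (hA : ContDiffAt ℝ 2 A z) (hΨ : ContDiffAt ℝ 2 Ψ z) (hz : Ψ z = z)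
    (hD : fderiv ℝ Ψ z = ContinuousLinearMap.id ℝ E) (W' W : E) :
    fderiv ℝ (fderiv ℝ (fun v => A (Ψ v))) z W' W
      = fderiv ℝ (fderiv ℝ A) z W' W + fderiv ℝ A z (fderiv ℝ (fderiv ℝ Ψ) z W' W) := by
  have hA' : ContDiffAt ℝ 2 A (Ψ z) := by rwa [hz]
  have hc : ContDiffAt ℝ 2 (fun v => A (Ψ v)) z := hA'.comp z hΨ
  have heq : (fun v => fderiv ℝ (fun v => A (Ψ v)) v W) =ᶠ[nhds z]
      fun v => fderiv ℝ A (Ψ v) (fderiv ℝ Ψ v W) := by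
    filter_upwards [lj_eventually_diff hΨ,
      hΨ.continuousAt.eventually (lj_eventually_diff hA')] with v h1 h2
    have := fderiv_comp v h2 h1
    change fderiv ℝ (A ∘ Ψ) v W = _
    rw [this]; rfl
  have dA : DifferentiableAt ℝ (fderiv ℝ A) (Ψ z) :=
    (hA'.fderiv_right (m := 1) (by norm_num)).differentiableAt (by norm_num)
  have dΨ := hΨ.differentiableAt (by norm_num)
  have dc : DifferentiableAt ℝ (fun v => fderiv ℝ A (Ψ v)) z := dA.comp z dΨ
  have fc : fderiv ℝ (fun v => fderiv ℝ A (Ψ v)) z W' = fderiv ℝ (fderiv ℝ A) z W' := by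
    have := fderiv_comp z dA dΨ
    change fderiv ℝ (fderiv ℝ A ∘ Ψ) z W' = _
    rw [this, hD, hz]; rfl
  rw [lj_fderiv2_apply hc, heq.fderiv_eq, fderiv_clm_apply dc (lj_differentiable_dir hΨ W)]
  simp only [ContinuousLinearMap.add_apply, ContinuousLinearMap.comp_apply,
    ContinuousLinearMap.flip_apply]
  rw [fc, hD, hz, ← lj_fderiv2_apply hΨ]
  simp [add_comm]

/-- Third derivatives are invariant under cyclic permutation. -/
lemma lj_third_symm {f : E → H} {z : E} (hf : ContDiffAt ℝ (⊤ : ℕ∞) f z) (U W₁ W₂ : E) :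
    fderiv ℝ (fderiv ℝ (fderiv ℝ f)) z W₁ W₂ U
      = fderiv ℝ (fderiv ℝ (fderiv ℝ f)) z U W₁ W₂ := by
  have h3 : ContDiffAt ℝ 3 f z := hf.of_le (WithTop.coe_le_coe.2 (le_top : (3 : ℕ∞) ≤ ⊤))
  have hF : ContDiffAt ℝ 2 (fderiv ℝ f) z := h3.fderiv_right (by norm_num)
  have hFF : DifferentiableAt ℝ (fderiv ℝ (fderiv ℝ f)) z :=
    (hF.fderiv_right (m := 1) (by norm_num)).differentiableAt (by norm_num)
  have key : ∀ P Q R : E, fderiv ℝ (fderiv ℝ (fderiv ℝ f)) z P Q R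
      = fderiv ℝ (fun v => fderiv ℝ (fderiv ℝ f) v Q R) z P := by
    intro P Q R
    rw [fderiv_clm_apply (hFF.clm_apply (differentiableAt_const Q)) (differentiableAt_const R),
      fderiv_clm_apply hFF (differentiableAt_const Q)]
    simp
  have s1 : ∀ P Q R : E, fderiv ℝ (fderiv ℝ (fderiv ℝ f)) z P Q R
      = fderiv ℝ (fderiv ℝ (fderiv ℝ f)) z P R Q := by
    intro P Q R
    rw [key, key]
    refine congrArg (fun L : E →L[ℝ] H => L P) (Filter.EventuallyEq.fderiv_eq ?_)
    filter_upwards [h3.eventually (by simp)] with v hv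
    exact (hv.isSymmSndFDerivAt (by simp; norm_num)).eq Q R
  have s2 : ∀ P Q : E, fderiv ℝ (fderiv ℝ (fderiv ℝ f)) z P Q
      = fderiv ℝ (fderiv ℝ (fderiv ℝ f)) z Q P := by
    intro P Q
    exact (hF.isSymmSndFDerivAt (by simp)).eq P Q
  rw [s1, s2]

end Helpers

/-- For a `3`-isometry `Ψ = (φ, δ)` of a lightlike metric with trivial `1`-jet at
`(p,r)` and `D²φ_{(p,r)} = 0`, the third derivative of the base component satisfies
`a(p,r)(D³φ(U,W₁,W₂), V_M) + a(p,r)(U_M, D³φ(V,W₁,W₂))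
  = − D²δ(W₁,W₂) · ∂_t a(p,r)(U_M, V_M)`. -/
theorem lightlike_third_jet_equation
    (m : ℕ) (hm : 1 ≤ m) (M : Set (Fin m → ℝ)) (hM : IsOpen M)
    (p : Fin m → ℝ) (hp : p ∈ M)
    (I : Set ℝ) (hIopen : IsOpen I) (hIconn : I.OrdConnected)
    (r : ℝ) (hr : r ∈ I)
    (a : (Fin m → ℝ) → ℝ → ((Fin m → ℝ) →L[ℝ] (Fin m → ℝ) →L[ℝ] ℝ))
    (ha_smooth : ContDiffOn ℝ (⊤ : ℕ∞) (fun q : (Fin m → ℝ) × ℝ => a q.1 q.2) (M ×ˢ I))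
    (ha_symm : ∀ x ∈ M, ∀ t ∈ I, ∀ U V : Fin m → ℝ, a x t U V = a x t V U)
    (ha_pos : ∀ x ∈ M, ∀ t ∈ I, ∀ U : Fin m → ℝ, U ≠ 0 → 0 < a x t U U)
    (φ : (Fin m → ℝ) × ℝ → (Fin m → ℝ)) (δ : (Fin m → ℝ) × ℝ → ℝ)
    (hΨ_smooth : ContDiffOn ℝ (⊤ : ℕ∞) (fun v => (φ v, δ v)) (M ×ˢ I))
    (hΨ_maps : ∀ v ∈ M ×ˢ I, (φ v, δ v) ∈ M ×ˢ I)
    (hΨp : (φ (p, r), δ (p, r)) = (p, r))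
    (hDΨp : fderiv ℝ (fun v => (φ v, δ v)) (p, r)
      = ContinuousLinearMap.id ℝ ((Fin m → ℝ) × ℝ))
    (hD2φ : fderiv ℝ (fderiv ℝ φ) (p, r) = 0)
    (hΔ : ∀ U V : (Fin m → ℝ) × ℝ, lightDelta m a φ δ U V (p, r) = 0)
    (hΔ' : ∀ U V : (Fin m → ℝ) × ℝ, fderiv ℝ (lightDelta m a φ δ U V) (p, r) = 0)
    (hΔ'' : ∀ U V : (Fin m → ℝ) × ℝ,
      fderiv ℝ (fderiv ℝ (lightDelta m a φ δ U V)) (p, r) = 0) :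
    ∀ U V W₁ W₂ : (Fin m → ℝ) × ℝ,
      a p r (fderiv ℝ (fderiv ℝ (fderiv ℝ φ)) (p, r) U W₁ W₂) V.1
        + a p r U.1 (fderiv ℝ (fderiv ℝ (fderiv ℝ φ)) (p, r) V W₁ W₂)
      = -(fderiv ℝ (fderiv ℝ δ) (p, r) W₁ W₂) * deriv (fun t => a p t) r U.1 V.1 := by
  intro U V W₁ W₂
  have hz : (p, r) ∈ M ×ˢ I := ⟨hp, hr⟩
  have hnhds : M ×ˢ I ∈ nhds (p, r) := (hM.prod hIopen).mem_nhds hz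
  have hA := ha_smooth.contDiffAt hnhds
  have hΨ := hΨ_smooth.contDiffAt hnhds
  have hφ : ContDiffAt ℝ (⊤ : ℕ∞) φ (p, r) := hΨ.fst
  have hδ : ContDiffAt ℝ (⊤ : ℕ∞) δ (p, r) := hΨ.snd
  have le2 : (2 : WithTop ℕ∞) ≤ ((⊤ : ℕ∞) : WithTop ℕ∞) :=
    WithTop.coe_le_coe.2 (le_top : (2 : ℕ∞) ≤ ⊤)
  have hA2 := hA.of_le le2
  have hΨ2 := hΨ.of_le le2
  have hφ2 := hφ.of_le le2
  have hδ2 := hδ.of_le le2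
  have hΦ : ContDiffAt ℝ 2 (fderiv ℝ φ) (p, r) :=
    (hφ.of_le (m := 3) (WithTop.coe_le_coe.2 (le_top : (3 : ℕ∞) ≤ ⊤))).fderiv_right (by norm_num)
  have hA2' : ContDiffAt ℝ 2 (fun q : (Fin m → ℝ) × ℝ => a q.1 q.2)
      ((fun v => (φ v, δ v)) (p, r)) := by
    change ContDiffAt ℝ 2 (fun q : (Fin m → ℝ) × ℝ => a q.1 q.2) (φ (p, r), δ (p, r))
    rwa [hΨp]
  have hB : ContDiffAt ℝ 2 (fun v => a (φ v) (δ v)) (p, r) :=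
    ContDiffAt.comp (p, r) (g := fun q : (Fin m → ℝ) × ℝ => a q.1 q.2)
      (f := fun v => (φ v, δ v)) hA2' hΨ2
  -- derivatives of the components of the map
  have hprod : ∀ᶠ v in nhds (p, r), fderiv ℝ (fun v => (φ v, δ v)) v
      = (fderiv ℝ φ v).prod (fderiv ℝ δ v) := by
    filter_upwards [lj_eventually_diff hφ2, lj_eventually_diff hδ2] with v h1 h2
    exact h1.fderiv_prodMk h2
  have hΦz : ∀ X, fderiv ℝ φ (p, r) X = X.1 := by
    intro X
    have := hprod.self_of_nhds
    rw [hDΨp] at this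
    have h2 := congrArg (fun L : ((Fin m → ℝ) × ℝ) →L[ℝ] ((Fin m → ℝ) × ℝ) => (L X).1) this
    simpa using h2.symm
  have hD2Ψ : fderiv ℝ (fderiv ℝ (fun v => (φ v, δ v))) (p, r) W₁ W₂
      = (0, fderiv ℝ (fderiv ℝ δ) (p, r) W₁ W₂) := by
    rw [lj_fderiv2_apply hΨ2]
    have heq : (fun v => fderiv ℝ (fun v => (φ v, δ v)) v W₂) =ᶠ[nhds (p, r)]
        fun v => (fderiv ℝ φ v W₂, fderiv ℝ δ v W₂) := by
      filter_upwards [hprod] with v hv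
      rw [hv]; rfl
    rw [heq.fderiv_eq, (lj_differentiable_dir hφ2 W₂).fderiv_prodMk
      (lj_differentiable_dir hδ2 W₂)]
    rw [ContinuousLinearMap.prod_apply, ← lj_fderiv2_apply hφ2, ← lj_fderiv2_apply hδ2, hD2φ]
    simp
  have hdt : ∀ s : ℝ, fderiv ℝ (fun q : (Fin m → ℝ) × ℝ => a q.1 q.2) (p, r) (0, s)
      = s • deriv (fun t => a p t) r := by
    intro s
    have hc : HasDerivAt (fun t : ℝ => (p, t)) ((0 : Fin m → ℝ), (1 : ℝ)) r :=
      (hasDerivAt_const r p).prodMk (hasDerivAt_id r)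
    have hd := (hA2.differentiableAt (by norm_num)).hasFDerivAt
    have h := (HasFDerivAt.comp_hasDerivAt r (f := fun t : ℝ => (p, t)) hd hc).deriv
    change deriv (fun t => a p t) r = _ at h
    rw [h, ← map_smul]
    simp
  -- the direction evaluations
  have hx : ∀ X, ContDiffAt ℝ 2 (fun v => fderiv ℝ φ v X) (p, r) :=
    fun X => hΦ.clm_apply contDiffAt_const
  have hxd : ∀ X, ∀ᶠ v in nhds (p, r), ∀ Y, fderiv ℝ (fun v => fderiv ℝ φ v X) v Y
      = fderiv ℝ (fderiv ℝ φ) v Y X := by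
    intro X
    filter_upwards [lj_eventually_diff hΦ] with v hv Y
    rw [fderiv_clm_apply hv (differentiableAt_const X)]
    simp
  have hx0 : ∀ X, fderiv ℝ (fun v => fderiv ℝ φ v X) (p, r) = 0 := by
    intro X
    refine ContinuousLinearMap.ext fun Y => ?_
    rw [(hxd X).self_of_nhds Y, hD2φ]; rfl
  have hx2 : ∀ X, fderiv ℝ (fderiv ℝ (fun v => fderiv ℝ φ v X)) (p, r) W₁ W₂
      = fderiv ℝ (fderiv ℝ (fderiv ℝ φ)) (p, r) X W₁ W₂ := by
    intro X
    rw [lj_fderiv2_apply (hx X)]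
    have heq : (fun v => fderiv ℝ (fun v => fderiv ℝ φ v X) v W₂) =ᶠ[nhds (p, r)]
        fun v => fderiv ℝ (fderiv ℝ φ) v W₂ X := by
      filter_upwards [hxd X] with v hv
      exact hv W₂
    rw [heq.fderiv_eq, fderiv_clm_apply (lj_differentiable_dir hΦ W₂) (differentiableAt_const X),
      ← lj_third_symm hφ X W₁ W₂, lj_fderiv2_apply hΦ]
    simp
  -- second derivative of the two terms of the defect
  have hT1 := lj_bil_fderiv2 hB (hx U) (hx V) (hx0 U) (hx0 V) W₁ W₂
  have hT2 := lj_bil_fderiv2 (x := fun _ => U.1) (y := fun _ => V.1) hA2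
    contDiffAt_const contDiffAt_const (by simp) (by simp) W₁ W₂
  have hBc := lj_comp_fderiv2 hA2 hΨ2 hΨp hDΨp W₁ W₂
  have c1 : ContDiffAt ℝ 2 (fun v => a (φ v) (δ v) (fderiv ℝ φ v U) (fderiv ℝ φ v V)) (p, r) :=
    (hB.clm_apply (hx U)).clm_apply (hx V)
  have c2 : ContDiffAt ℝ 2 (fun v : (Fin m → ℝ) × ℝ => a v.1 v.2 U.1 V.1) (p, r) :=
    (hA2.clm_apply contDiffAt_const).clm_apply contDiffAt_const
  have hsub : fderiv ℝ (fderiv ℝ (lightDelta m a φ δ U V)) (p, r) W₁ W₂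
      = fderiv ℝ (fderiv ℝ (fun v => a (φ v) (δ v) (fderiv ℝ φ v U) (fderiv ℝ φ v V)))
          (p, r) W₁ W₂
        - fderiv ℝ (fderiv ℝ (fun v : (Fin m → ℝ) × ℝ => a v.1 v.2 U.1 V.1)) (p, r) W₁ W₂ := by
    have heq : fderiv ℝ (lightDelta m a φ δ U V) =ᶠ[nhds (p, r)]
        fun v => fderiv ℝ (fun v => a (φ v) (δ v) (fderiv ℝ φ v U) (fderiv ℝ φ v V)) v
          - fderiv ℝ (fun v : (Fin m → ℝ) × ℝ => a v.1 v.2 U.1 V.1) v := by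
      filter_upwards [lj_eventually_diff c1, lj_eventually_diff c2] with v h1 h2
      exact fderiv_fun_sub h1 h2
    rw [heq.fderiv_eq, fderiv_fun_sub
      ((c1.fderiv_right (m := 1) (by norm_num)).differentiableAt (by norm_num))
      ((c2.fderiv_right (m := 1) (by norm_num)).differentiableAt (by norm_num))]
    rfl
  rw [hΔ'', hT1, hT2, hBc, hD2Ψ, hdt, hx2, hx2, hΦz, hΦz] at hsub
  have e1 : φ (p, r) = p := congrArg Prod.fst hΨp
  have e2 : δ (p, r) = r := congrArg Prod.snd hΨp
  rw [e1, e2] at hsub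
  simp at hsub
  linarith
end

section
/- Sub-rigidity of generic lightlike metrics (local coordinate form of the (3,1) sub-rigidity theorem): Assume m ≥ 3 (so the lightlike manifold M × I has dimension ≥ 4) and that ∂_t a(p,r) is a nondegenerate bilinear form on ℝᵐ (genericity). Suppose Ψ has trivial 1-jet at (p,r) and for all U, V ∈ ℝᵐ × ℝ the function Δ_{U,V} vanishes at (p,r) together with its first and second Fréchet derivatives (Ψ is a 3-isometry at (p,r)). Then Ψ has trivial 2-jet at (p,r): both D²φ_{(p,r)} = 0 and D²δ_{(p,r)} = 0. -/
section helpers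
variable {E F H : Type*} [NormedAddCommGroup E] [NormedSpace ℝ E]
  [NormedAddCommGroup F] [NormedSpace ℝ F] [NormedAddCommGroup H] [NormedSpace ℝ H]

theorem lsr_fderiv2_apply {f : E → F} {z : E}
    (hf : DifferentiableAt ℝ (fderiv ℝ f) z) (X W : E) :
    fderiv ℝ (fderiv ℝ f) z X W = fderiv ℝ (fun v => fderiv ℝ f v W) z X := by
  rw [fderiv_clm_apply hf (differentiableAt_const W)]
  simp

theorem lsr_fderiv2_congr {f : E → F} {z : E} {W : E} {g : E → F}
    (hf : DifferentiableAt ℝ (fderiv ℝ f) z)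
    (h : ∀ᶠ v in nhds z, fderiv ℝ f v W = g v) (X : E) :
    fderiv ℝ (fderiv ℝ f) z X W = fderiv ℝ g z X := by
  rw [lsr_fderiv2_apply hf, Filter.EventuallyEq.fderiv_eq h]

theorem lsr_diff_fderiv {f : E → F} {z : E} (hf : ContDiffAt ℝ (⊤ : ℕ∞) f z) :
    ContDiffAt ℝ (⊤ : ℕ∞) (fderiv ℝ f) z :=
  hf.fderiv_right (by simp)

theorem lsr_ev_diff {f : E → F} {z : E} (hf : ContDiffAt ℝ (⊤ : ℕ∞) f z) :
    ∀ᶠ v in nhds z, DifferentiableAt ℝ f v := by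
  have h1 : ContDiffAt ℝ 1 f z := hf.of_le (by exact_mod_cast le_top)
  filter_upwards [h1.eventually (by simp)] with v hv
  exact hv.differentiableAt (by simp)

theorem lsr_diff {f : E → F} {z : E} (hf : ContDiffAt ℝ (⊤ : ℕ∞) f z) :
    DifferentiableAt ℝ f z := (lsr_ev_diff hf).self_of_nhds

theorem lsr_apply {f : E → (F →L[ℝ] H)} {z : E} (hf : ContDiffAt ℝ (⊤ : ℕ∞) f z) {g : E → F}
    (hg : ContDiffAt ℝ (⊤ : ℕ∞) g z) :
    ContDiffAt ℝ (⊤ : ℕ∞) (fun v => f v (g v)) z := hf.clm_apply hg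

theorem lsr_fderiv_bil {G : E → (F →L[ℝ] F →L[ℝ] ℝ)} {f g : E → F} {z : E}
    (hG : DifferentiableAt ℝ G z) (hf : DifferentiableAt ℝ f z)
    (hg : DifferentiableAt ℝ g z) (W : E) :
    fderiv ℝ (fun v => G v (f v) (g v)) z W = fderiv ℝ G z W (f z) (g z)
      + G z (fderiv ℝ f z W) (g z) + G z (f z) (fderiv ℝ g z W) := by
  rw [fderiv_clm_apply (hG.clm_apply hf) hg, fderiv_clm_apply hG hf]
  simp
  ring

set_option maxSynthPendingDepth 3 in
theorem lsr_fderiv2_bil {G : E → (F →L[ℝ] F →L[ℝ] ℝ)} {f g : E → F} {z : E}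
    (hG : ContDiffAt ℝ (⊤ : ℕ∞) G z) (hf : ContDiffAt ℝ (⊤ : ℕ∞) f z)
    (hg : ContDiffAt ℝ (⊤ : ℕ∞) g z) (hf0 : fderiv ℝ f z = 0) (hg0 : fderiv ℝ g z = 0)
    (X W : E) :
    fderiv ℝ (fderiv ℝ (fun v => G v (f v) (g v))) z X W
      = fderiv ℝ (fderiv ℝ G) z X W (f z) (g z)
      + G z (fderiv ℝ (fderiv ℝ f) z X W) (g z) + G z (f z) (fderiv ℝ (fderiv ℝ g) z X W) := by
  have hG' := lsr_apply (lsr_diff_fderiv hG) (contDiffAt_const (c := W))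
  have hf' := lsr_apply (lsr_diff_fderiv hf) (contDiffAt_const (c := W))
  have hg' := lsr_apply (lsr_diff_fderiv hg) (contDiffAt_const (c := W))
  rw [lsr_fderiv2_congr (W := W) (g := fun v => fderiv ℝ G v W (f v) (g v)
      + G v (fderiv ℝ f v W) (g v) + G v (f v) (fderiv ℝ g v W))
      (lsr_diff (lsr_diff_fderiv (lsr_apply (lsr_apply hG hf) hg)))]
  · rw [fderiv_fun_add, fderiv_fun_add]
    · simp only [_root_.add_apply]
      rw [lsr_fderiv_bil (lsr_diff hG') (lsr_diff hf) (lsr_diff hg),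
        lsr_fderiv_bil (lsr_diff hG) (lsr_diff hf') (lsr_diff hg),
        lsr_fderiv_bil (lsr_diff hG) (lsr_diff hf) (lsr_diff hg'),
        lsr_fderiv2_apply (lsr_diff (lsr_diff_fderiv hG)),
        lsr_fderiv2_apply (lsr_diff (lsr_diff_fderiv hf)),
        lsr_fderiv2_apply (lsr_diff (lsr_diff_fderiv hg))]
      simp [hf0, hg0]
    · exact lsr_diff (lsr_apply (lsr_apply hG' hf) hg)
    · exact lsr_diff (lsr_apply (lsr_apply hG hf') hg)
    · exact lsr_diff ((lsr_apply (lsr_apply hG' hf) hg).add (lsr_apply (lsr_apply hG hf') hg))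
    · exact lsr_diff (lsr_apply (lsr_apply hG hf) hg')
  · filter_upwards [lsr_ev_diff hG, lsr_ev_diff hf, lsr_ev_diff hg] with v h1 h2 h3
    exact lsr_fderiv_bil h1 h2 h3 W

theorem lsr_fderiv2_comp {A : E → F} {P : E → E} {z : E} (hPz : P z = z)
    (hA : ContDiffAt ℝ (⊤ : ℕ∞) A z) (hP : ContDiffAt ℝ (⊤ : ℕ∞) P z)
    (hP1 : fderiv ℝ P z = ContinuousLinearMap.id ℝ E) (X W : E) :
    fderiv ℝ (fderiv ℝ (fun v => A (P v))) z X W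
      = fderiv ℝ (fderiv ℝ A) z X W + fderiv ℝ A z (fderiv ℝ (fderiv ℝ P) z X W) := by
  have hA' : ContDiffAt ℝ (⊤ : ℕ∞) A (P z) := by rw [hPz]; exact hA
  have hAP : ContDiffAt ℝ (⊤ : ℕ∞) (fun v => A (P v)) z := hA'.comp z hP
  have hdA : ContDiffAt ℝ (⊤ : ℕ∞) (fderiv ℝ A) (P z) := lsr_diff_fderiv hA'
  have hdAP : ContDiffAt ℝ (⊤ : ℕ∞) (fun v => fderiv ℝ A (P v)) z := hdA.comp z hP
  have hP' := lsr_apply (lsr_diff_fderiv hP) (contDiffAt_const (c := W))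
  rw [lsr_fderiv2_congr (W := W) (g := fun v => fderiv ℝ A (P v) (fderiv ℝ P v W))
      (lsr_diff (lsr_diff_fderiv hAP))]
  · rw [fderiv_clm_apply (lsr_diff hdAP) (lsr_diff hP'),
      lsr_fderiv2_apply (f := P) (lsr_diff (lsr_diff_fderiv hP))]
    have : fderiv ℝ (fun v => fderiv ℝ A (P v)) z = fderiv ℝ (fderiv ℝ A) z := by
      have := fderiv_comp z (lsr_diff hdA) (lsr_diff hP)
      rw [hP1, hPz] at this
      simpa [Function.comp_def] using this
    simp [this, hP1, hPz, add_comm]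
  · filter_upwards [lsr_ev_diff hP, hP.continuousAt.eventually (lsr_ev_diff hA')] with v h1 h2
    have := fderiv_comp v h2 h1
    simp only [Function.comp_def] at this
    rw [this]; rfl

theorem lsr_two_le : (2 : WithTop ℕ∞) ≤ ((⊤ : ℕ∞) : WithTop ℕ∞) := by
  have : ((2 : ℕ∞) : WithTop ℕ∞) ≤ ((⊤ : ℕ∞) : WithTop ℕ∞) := WithTop.coe_le_coe.2 le_top
  exact this

theorem lsr_symm {f : E → F} {z : E} (hf : ContDiffAt ℝ (⊤ : ℕ∞) f z) (X W : E) :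
    fderiv ℝ (fderiv ℝ f) z X W = fderiv ℝ (fderiv ℝ f) z W X :=
  (hf.isSymmSndFDerivAt (by simpa using lsr_two_le)).eq X W

theorem lsr_symm3 {f : E → F} {z : E} (hf : ContDiffAt ℝ (⊤ : ℕ∞) f z) (X W U : E) :
    fderiv ℝ (fderiv ℝ (fun v => fderiv ℝ f v U)) z X W
      = fderiv ℝ (fderiv ℝ (fun v => fderiv ℝ f v W)) z X U := by
  have key : ∀ U W : E, fderiv ℝ (fderiv ℝ (fun v => fderiv ℝ f v U)) z X W
      = fderiv ℝ (fun v => fderiv ℝ (fderiv ℝ f) v W U) z X := by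
    intro U W
    apply lsr_fderiv2_congr (lsr_diff (lsr_diff_fderiv
      (lsr_apply (lsr_diff_fderiv hf) contDiffAt_const)))
    filter_upwards [lsr_ev_diff (lsr_diff_fderiv hf)] with v hv
    rw [lsr_fderiv2_apply hv]
  rw [key, key]
  congr 1
  apply Filter.EventuallyEq.fderiv_eq
  have h2 : ContDiffAt ℝ 2 f z := hf.of_le lsr_two_le
  filter_upwards [h2.eventually (by simp)] with v hv
  exact (hv.isSymmSndFDerivAt (by simp)).eq W U

/-- Kulkarni–Nomizu injectivity. -/
theorem lsr_KN {V : Type*} [AddCommGroup V] [Module ℝ V] [FiniteDimensional ℝ V]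
    (hV : 3 ≤ Module.finrank ℝ V) (q c : LinearMap.BilinForm ℝ V)
    (hc : ∀ x y, c x y = c y x)
    (hnd : ∀ x, (∀ y, c x y = 0) → x = 0)
    (h : ∀ x y u v, q x y * c u v + q u v * c x y = q x u * c y v + q y v * c x u) :
    q = 0 := by
  obtain ⟨e, he⟩ := LinearMap.BilinForm.exists_orthogonal_basis
    (B := c) (by constructor; intro x y; simpa using hc x y)
  have hoff : ∀ i j, i ≠ j → c (e i) (e j) = 0 := fun i j hij => he hij
  have hdiag : ∀ i, c (e i) (e i) ≠ 0 := by
    intro i hi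
    apply e.ne_zero i
    apply hnd
    intro y
    have : c (e i) = 0 := by
      apply e.ext
      intro j
      by_cases hij : i = j
      · subst hij; simpa using hi
      · simpa using hoff i j hij
    simp [this]
  have hex : ∀ i j : Fin (Module.finrank ℝ V), ∃ k, k ≠ i ∧ k ≠ j := by
    intro i j
    have : ∃ k, k ∉ ({i, j} : Finset (Fin (Module.finrank ℝ V))) := by
      by_contra! hcon
      have h1 : (Finset.univ : Finset (Fin (Module.finrank ℝ V))) ⊆ {i, j} := fun k _ => hcon k
      have h2 := Finset.card_le_card h1
      have h3 := Finset.card_le_two (a := i) (b := j)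
      simp only [Finset.card_univ, Fintype.card_fin] at h2
      omega
    obtain ⟨k, hk⟩ := this
    simp at hk
    exact ⟨k, hk.1, hk.2⟩
  have hpair : ∀ i j, i ≠ j →
      q (e i) (e i) * c (e j) (e j) + q (e j) (e j) * c (e i) (e i) = 0 := by
    intro i j hij
    rw [h, hoff i j hij]; ring
  refine e.ext fun i => e.ext fun j => ?_
  by_cases hij : i = j
  · subst hij
    obtain ⟨k, hk, -⟩ := hex i i
    obtain ⟨l, hl, hlk⟩ := hex i k
    have h1 := hpair i k hk.symm
    have h2 := hpair i l hl.symm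
    have h3 := hpair k l hlk.symm
    have h4 : 2 * (q (e i) (e i) * (c (e k) (e k) * c (e l) (e l))) = 0 := by
      linear_combination c (e l) (e l) * h1 + c (e k) (e k) * h2 - c (e i) (e i) * h3
    simpa [hdiag] using h4
  · obtain ⟨k, hk, hk'⟩ := hex i j
    have h1 := h (e i) (e j) (e k) (e k)
    rw [hoff i j hij, hoff j k hk'.symm, hoff i k hk.symm] at h1
    simpa [hdiag] using h1

end helpers

set_option maxHeartbeats 2000000 in
/-- **Sub-rigidity of generic lightlike metrics** (local coordinate form of the
`(3,1)` sub-rigidity theorem). For `m ≥ 3` (so the lightlike manifold `M × I` has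
dimension `≥ 4`) and a lightlike metric generic at `(p,r)` (`∂_t a(p,r)`
nondegenerate), a `3`-isometry `Ψ = (φ, δ)` with trivial `1`-jet at `(p,r)` has
trivial `2`-jet at `(p,r)`: `D²φ_{(p,r)} = 0` and `D²δ_{(p,r)} = 0`. -/
theorem lightlike_sub_rigidity
    (m : ℕ) (hm : 3 ≤ m) (M : Set (Fin m → ℝ)) (hM : IsOpen M)
    (p : Fin m → ℝ) (hp : p ∈ M)
    (I : Set ℝ) (hIopen : IsOpen I) (hIconn : I.OrdConnected)
    (r : ℝ) (hr : r ∈ I)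
    (a : (Fin m → ℝ) → ℝ → ((Fin m → ℝ) →L[ℝ] (Fin m → ℝ) →L[ℝ] ℝ))
    (ha_smooth : ContDiffOn ℝ (⊤ : ℕ∞) (fun q : (Fin m → ℝ) × ℝ => a q.1 q.2) (M ×ˢ I))
    (ha_symm : ∀ x ∈ M, ∀ t ∈ I, ∀ U V : Fin m → ℝ, a x t U V = a x t V U)
    (ha_pos : ∀ x ∈ M, ∀ t ∈ I, ∀ U : Fin m → ℝ, U ≠ 0 → 0 < a x t U U)
    (ha_generic : ∀ U : Fin m → ℝ,
      (∀ V : Fin m → ℝ, deriv (fun t => a p t) r U V = 0) → U = 0)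
    (φ : (Fin m → ℝ) × ℝ → (Fin m → ℝ)) (δ : (Fin m → ℝ) × ℝ → ℝ)
    (hΨ_smooth : ContDiffOn ℝ (⊤ : ℕ∞) (fun v => (φ v, δ v)) (M ×ˢ I))
    (hΨ_maps : ∀ v ∈ M ×ˢ I, (φ v, δ v) ∈ M ×ˢ I)
    (hΨp : (φ (p, r), δ (p, r)) = (p, r))
    (hDΨp : fderiv ℝ (fun v => (φ v, δ v)) (p, r)
      = ContinuousLinearMap.id ℝ ((Fin m → ℝ) × ℝ))
    (hΔ : ∀ U V : (Fin m → ℝ) × ℝ, lightDelta m a φ δ U V (p, r) = 0)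
    (hΔ' : ∀ U V : (Fin m → ℝ) × ℝ, fderiv ℝ (lightDelta m a φ δ U V) (p, r) = 0)
    (hΔ'' : ∀ U V : (Fin m → ℝ) × ℝ,
      fderiv ℝ (fderiv ℝ (lightDelta m a φ δ U V)) (p, r) = 0) :
    fderiv ℝ (fderiv ℝ φ) (p, r) = 0 ∧ fderiv ℝ (fderiv ℝ δ) (p, r) = 0 := by
  classical
  set z : (Fin m → ℝ) × ℝ := (p, r) with hz
  set A : (Fin m → ℝ) × ℝ → ((Fin m → ℝ) →L[ℝ] (Fin m → ℝ) →L[ℝ] ℝ) := fun q => a q.1 q.2 with hAdef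
  set P : (Fin m → ℝ) × ℝ → (Fin m → ℝ) × ℝ := fun v => (φ v, δ v) with hPdef
  have hPz : P z = z := hΨp
  have hnhds : M ×ˢ I ∈ nhds z := (hM.prod hIopen).mem_nhds ⟨hp, hr⟩
  have hA : ContDiffAt ℝ (⊤ : ℕ∞) A z := ha_smooth.contDiffAt hnhds
  have hP : ContDiffAt ℝ (⊤ : ℕ∞) P z := hΨ_smooth.contDiffAt hnhds
  have hφ : ContDiffAt ℝ (⊤ : ℕ∞) φ z := hP.fst
  have hδ : ContDiffAt ℝ (⊤ : ℕ∞) δ z := hP.snd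
  have hA' : ContDiffAt ℝ (⊤ : ℕ∞) A (P z) := by rw [hPz]; exact hA
  have hG : ContDiffAt ℝ (⊤ : ℕ∞) (fun v => A (P v)) z := hA'.comp z hP
  have hfU : ∀ U, ContDiffAt ℝ (⊤ : ℕ∞) (fun v => fderiv ℝ φ v U) z := fun U =>
    lsr_apply (lsr_diff_fderiv hφ) contDiffAt_const
  have hφ1 : ∀ W, fderiv ℝ φ z W = W.1 := by
    intro W
    have := congrArg (fun L => (L W).1) hDΨp
    simpa [hPdef, DifferentiableAt.fderiv_prodMk (lsr_diff hφ) (lsr_diff hδ)] using this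
  have hG1 : fderiv ℝ (fun v => A (P v)) z = fderiv ℝ A z := by
    have := fderiv_comp z (lsr_diff hA') (lsr_diff hP)
    rw [hDΨp, hPz] at this
    simpa [Function.comp_def] using this
  have hΔeq : ∀ U V, lightDelta m a φ δ U V = fun v =>
      A (P v) (fderiv ℝ φ v U) (fderiv ℝ φ v V) - A v U.1 V.1 := fun U V => rfl
  have bsymm : ∀ u v, A z u v = A z v u := ha_symm p hp r hr
  have bpos : ∀ u, A z u u = 0 → u = 0 := by
    intro u hu
    by_contra hne
    exact (ha_pos p hp r hr u hne).ne' hu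
  have hAc : ∀ u v : Fin m → ℝ, ContDiffAt ℝ (⊤ : ℕ∞) (fun w => A w u v) z := fun u v =>
    lsr_apply (lsr_apply hA contDiffAt_const) contDiffAt_const
  -- first order
  have h1 : ∀ U V W, A z (fderiv ℝ (fderiv ℝ φ) z W U) V.1
      + A z U.1 (fderiv ℝ (fderiv ℝ φ) z W V) = 0 := by
    intro U V W
    have h := congrArg (fun L => L W) (hΔ' U V)
    simp only [hΔeq] at h
    rw [fderiv_fun_sub (lsr_diff (lsr_apply (lsr_apply hG (hfU U)) (hfU V))) (lsr_diff (hAc _ _)),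
      _root_.sub_apply,
      lsr_fderiv_bil (lsr_diff hG) (lsr_diff (hfU U)) (lsr_diff (hfU V)),
      lsr_fderiv_bil (lsr_diff hA) (differentiableAt_const _) (differentiableAt_const _),
      hG1, hPz, hφ1, hφ1, ← lsr_fderiv2_apply (lsr_diff (lsr_diff_fderiv hφ)),
      ← lsr_fderiv2_apply (lsr_diff (lsr_diff_fderiv hφ))] at h
    simp at h
    linarith
  have hQ : ∀ W U, fderiv ℝ (fderiv ℝ φ) z W U = 0 := by
    intro W U
    have hF : ∀ W U V : (Fin m → ℝ) × ℝ, A z (fderiv ℝ (fderiv ℝ φ) z W U) V.1 = 0 := by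
      intro W U V
      have e1 := h1 U V W
      have e2 := h1 V W U
      have e3 := h1 W U V
      rw [bsymm U.1] at e1
      rw [bsymm V.1] at e2
      rw [bsymm W.1] at e3
      rw [lsr_symm hφ V W, lsr_symm hφ V U] at e3
      rw [lsr_symm hφ U W] at e2
      linarith
    exact bpos _ (hF W U (_, 0))
  have hQ0 : fderiv ℝ (fderiv ℝ φ) z = 0 := by
    refine ContinuousLinearMap.ext fun W => ContinuousLinearMap.ext fun U => ?_; simpa using hQ W U
  refine ⟨hQ0, ?_⟩
  have hfU0 : ∀ U, fderiv ℝ (fun v => fderiv ℝ φ v U) z = 0 := by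
    intro U; refine ContinuousLinearMap.ext fun W => ?_
    rw [← lsr_fderiv2_apply (lsr_diff (lsr_diff_fderiv hφ)), hQ]; rfl
  have hD2P : ∀ X W, fderiv ℝ (fderiv ℝ P) z X W = (0, fderiv ℝ (fderiv ℝ δ) z X W) := by
    intro X W
    rw [lsr_fderiv2_congr (W := W) (g := fun v => (fderiv ℝ φ v W, fderiv ℝ δ v W))
      (lsr_diff (lsr_diff_fderiv hP))]
    · rw [DifferentiableAt.fderiv_prodMk (lsr_diff (hfU W))
        (lsr_diff (lsr_apply (lsr_diff_fderiv hδ) contDiffAt_const)), hfU0,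
        lsr_fderiv2_apply (lsr_diff (lsr_diff_fderiv hδ))]
      rfl
    · filter_upwards [lsr_ev_diff hφ, lsr_ev_diff hδ] with v h1 h2
      rw [hPdef, DifferentiableAt.fderiv_prodMk h1 h2]; rfl
  set c : (Fin m → ℝ) →L[ℝ] (Fin m → ℝ) →L[ℝ] ℝ := fderiv ℝ A z (0, 1) with hc
  have hcd : deriv (fun t => a p t) r = c := by
    have h2 : HasDerivAt (fun t : ℝ => ((p, t) : (Fin m → ℝ) × ℝ)) (0, 1) r :=
      (hasDerivAt_const r p).prodMk (hasDerivAt_id r)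
    exact ((lsr_diff hA).hasFDerivAt.comp_hasDerivAt r h2).deriv
  rw [hcd] at ha_generic
  have csymm : ∀ u v, c u v = c v u := by
    intro u v
    have e : ∀ u v, c u v = fderiv ℝ (fun w => A w u v) z (0, 1) := by
      intro u v
      rw [lsr_fderiv_bil (lsr_diff hA) (differentiableAt_const _) (differentiableAt_const _)]
      simp [hc]
    rw [e, e]
    congr 1
    apply Filter.EventuallyEq.fderiv_eq
    filter_upwards [hnhds] with w hw
    exact ha_symm _ hw.1 _ hw.2 u v
  have hcA : ∀ s : ℝ, fderiv ℝ A z (0, s) = s • c := by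
    intro s
    rw [hc, ← map_smul]; simp
  set q := fderiv ℝ (fderiv ℝ δ) z with hq
  let T : (Fin m → ℝ) × ℝ → (Fin m → ℝ) × ℝ → (Fin m → ℝ) × ℝ → (Fin m → ℝ) :=
    fun W X U => fderiv ℝ (fderiv ℝ (fun v => fderiv ℝ φ v U)) z W X
  have T12 : ∀ W X U, T W X U = T X W U := fun W X U => lsr_symm (hfU U) W X
  have T23 : ∀ W X U, T W X U = T W U X := fun W X U => lsr_symm3 hφ W X U
  -- second order
  have h2 : ∀ U V W X, q W X * c U.1 V.1 + A z (T W X U) V.1 + A z (T W X V) U.1 = 0 := by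
    intro U V W X
    have h := congrArg (fun L => L W X) (hΔ'' U V)
    simp only [hΔeq] at h
    have hB := lsr_apply (lsr_apply hG (hfU U)) (hfU V)
    have hs : fderiv ℝ (fderiv ℝ (fun v =>
      A (P v) (fderiv ℝ φ v U) (fderiv ℝ φ v V) - A v U.1 V.1)) z W X =
      fderiv ℝ (fderiv ℝ (fun v => A (P v) (fderiv ℝ φ v U) (fderiv ℝ φ v V))) z W X
      - fderiv ℝ (fderiv ℝ (fun v => A v U.1 V.1)) z W X := by
      have : fderiv ℝ (fun v => A (P v) (fderiv ℝ φ v U) (fderiv ℝ φ v V) - A v U.1 V.1)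
          =ᶠ[nhds z] fun v => fderiv ℝ (fun v => A (P v) (fderiv ℝ φ v U) (fderiv ℝ φ v V)) v
            - fderiv ℝ (fun v => A v U.1 V.1) v := by
        filter_upwards [lsr_ev_diff hB, lsr_ev_diff (hAc U.1 V.1)] with v h1 h2
        exact fderiv_fun_sub h1 h2
      rw [this.fderiv_eq, fderiv_fun_sub (lsr_diff (lsr_diff_fderiv hB))
        (lsr_diff (lsr_diff_fderiv (hAc U.1 V.1)))]
      rfl
    rw [hs, lsr_fderiv2_bil hG (hfU U) (hfU V) (hfU0 U) (hfU0 V),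
      lsr_fderiv2_bil hA contDiffAt_const contDiffAt_const (by simp) (by simp),
      lsr_fderiv2_comp hPz hA hP hDΨp, hD2P, hcA, hPz, hφ1, hφ1] at h
    have hT : ∀ U, fderiv ℝ (fderiv ℝ (fun v => fderiv ℝ φ v U)) z W X = T W X U := fun _ => rfl
    have hk : ∀ u : Fin m → ℝ, fderiv ℝ (fderiv ℝ (fun _ : (Fin m → ℝ) × ℝ => u)) z = 0 := by
      intro u
      have : fderiv ℝ (fun _ : (Fin m → ℝ) × ℝ => u) = fun _ => 0 := by ext1 v; simp
      rw [this]; simp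
    rw [hT, hT, hk, hk, bsymm U.1] at h
    simp at h
    linarith
  have hT0 : ∀ W X s, T W X (0, s) = 0 := by
    intro W X s
    apply bpos
    have := h2 (T W X (0, s), 0) (0, s) W X
    simpa using this
  have hT0' : ∀ W X s, T W (0, s) X = 0 := fun W X s => by rw [T23, hT0]
  have hm0 : 0 < m := by omega
  have hcne : ∃ u v, c u v ≠ 0 := by
    by_contra! hcon
    have := ha_generic (fun _ => 1) (hcon _)
    have := congrFun this ⟨0, hm0⟩
    simp at this
  have hq0 : ∀ W s, q W (0, s) = 0 := by
    intro W s
    obtain ⟨u, v, huv⟩ := hcne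
    have := h2 (u, 0) (v, 0) W (0, s)
    rw [hT0', hT0'] at this
    simpa [huv] using this
  have qsymm : ∀ W X, q W X = q X W := lsr_symm hδ
  have hKN := lsr_KN (V := Fin m → ℝ) (by simpa using hm)
    (LinearMap.mk₂ ℝ (fun x y => q (x, 0) (y, 0))
      (by intro x y w
          have : ((x + y, 0) : (Fin m → ℝ) × ℝ) = (x, 0) + (y, 0) := by simp
          simp only [this, map_add, _root_.add_apply])
      (by intro k x w
          have : ((k • x, 0) : (Fin m → ℝ) × ℝ) = k • (x, 0) := by simp
          simp only [this, map_smul, _root_.smul_apply])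
      (by intro w x y
          have : ((x + y, 0) : (Fin m → ℝ) × ℝ) = (x, 0) + (y, 0) := by simp
          simp only [this, map_add, _root_.add_apply])
      (by intro k w x
          have : ((k • x, 0) : (Fin m → ℝ) × ℝ) = k • (x, 0) := by simp
          simp only [this, map_smul, _root_.smul_apply]))
    (LinearMap.mk₂ ℝ (fun x y => c x y) (by simp) (by simp) (by simp) (by simp))
    csymm ha_generic (by
      intro x y u v
      simp only [LinearMap.mk₂_apply]
      have e1 := h2 (u, 0) (v, 0) (x, 0) (y, 0)
      have e2 := h2 (x, 0) (y, 0) (u, 0) (v, 0)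
      have e3 := h2 (y, 0) (v, 0) (x, 0) (u, 0)
      have e4 := h2 (x, 0) (u, 0) (y, 0) (v, 0)
      have k1 : T (x, 0) (u, 0) (y, 0) = T (x, 0) (y, 0) (u, 0) := T23 _ _ _
      have k2 : T (x, 0) (u, 0) (v, 0) = T (u, 0) (v, 0) (x, 0) := by rw [T12, T23]
      have k3 : T (y, 0) (v, 0) (x, 0) = T (x, 0) (y, 0) (v, 0) := by rw [T23, T12]
      have k4 : T (y, 0) (v, 0) (u, 0) = T (u, 0) (v, 0) (y, 0) := by
        rw [T23, T12, T23]
      rw [k1, k2] at e3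
      rw [k3, k4] at e4
      simp only at e1 e2 e3 e4
      linarith)
  have hqM : ∀ x y, q (x, 0) (y, 0) = 0 := by
    intro x y
    have := congrArg (fun L => L x y) hKN
    simpa using this
  refine ContinuousLinearMap.ext fun W => ContinuousLinearMap.ext fun X => ?_
  have hW : W = (W.1, 0) + (0, W.2) := by simp
  have hX : X = (X.1, 0) + (0, X.2) := by simp
  rw [hX, map_add, hq0, add_zero, qsymm, hW, map_add, hq0, hqM]
  simp
end
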